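/- (Stanley's reciprocity identity) For every nonempty polytope P, Σ_{∅ ≤ F ≤ P} (−1)^{dim F} · g(F*,t) · g(P/F,t) = 0, an identity of polynomials in t, where the sum runs over all faces F of P including the empty face ∅ (of dimension −1) and P itself. -/

import Mathlib

open Classical Polynomial

section PolytopeDefs

variable {V : Type*} [AddCommGroup V] [Module ℝ V]

/-- A polytope: the convex hull of finitely many points. -/
def IsPolytope (P : Set V) : Prop := ∃ S : Finset V, P = convexHull ℝ (S : Set V)

/-- Faces of a polytope (or of a cone): the set itself, the empty face, and the
sets of maximizers of linear functionals (equivalently, intersections with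
supporting hyperplanes). -/
def IsFace (P F : Set V) : Prop :=
  F = P ∨ F = ∅ ∨ ∃ l : V →ₗ[ℝ] ℝ, F = {x | x ∈ P ∧ ∀ y ∈ P, l y ≤ l x}

/-- Dimension of a polytope: the dimension of its affine span, with the
convention `pdim ∅ = -1`. -/
noncomputable def pdim (P : Set V) : ℤ :=
  if P = ∅ then -1 else (Module.finrank ℝ (affineSpan ℝ P).direction : ℤ)

/-- The `g`-truncation: from the toric `h`-polynomial of a `d`-dimensional
polytope to its toric `g`-polynomial, via `g_k = h_k - h_{k-1}` for
`0 ≤ k ≤ d/2`, with `h_{-1} = 0`. -/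
noncomputable def truncG (d : ℤ) (h : Polynomial ℚ) : Polynomial ℚ :=
  ∑ k ∈ Finset.range (d.toNat / 2 + 1),
    Polynomial.C (h.coeff k - if k = 0 then 0 else h.coeff (k - 1)) * Polynomial.X ^ k

/-- Fuelled recursion computing the toric `h`-polynomial of the interval `[F,G]`
of a face lattice (with `F` playing the role of the empty face):
`h([F,G],t) = ∑_{F ≤ G' < G} g([F,G'],t) · (t-1)^{dim G - dim G' - 1}`. -/
noncomputable def relHAux : ℕ → Set V → Set V → Polynomial ℚ
  | 0, _, _ => 1
  | n + 1, F, G =>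
      if G = F then 1
      else ∑ᶠ G' ∈ {G' : Set V | IsFace G G' ∧ F ⊆ G' ∧ G' ≠ G},
        truncG (pdim G' - pdim F - 1) (relHAux n F G') *
          (Polynomial.X - 1) ^ (pdim G - pdim G' - 1).toNat

/-- The toric `h`-polynomial of the interval `[F,G]` in a face lattice. -/
noncomputable def relH (F G : Set V) : Polynomial ℚ := relHAux (pdim G + 1).toNat F G

/-- The toric `g`-polynomial of the interval `[F,G]` in a face lattice;
`relG F P` is the polynomial `g(P/F, t)`. -/
noncomputable def relG (F G : Set V) : Polynomial ℚ :=
  truncG (pdim G - pdim F - 1) (relH F G)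

/-- The toric `h`-polynomial `h(P,t)` of a polytope `P`. -/
noncomputable def toricH (P : Set V) : Polynomial ℚ := relH ∅ P

/-- The toric `g`-polynomial `g(P,t)` of a polytope `P`. -/
noncomputable def toricG (P : Set V) : Polynomial ℚ := relG ∅ P

end PolytopeDefs
section DualDefs

variable {V : Type*} [AddCommGroup V] [Module ℝ V]

/-- Fuelled recursion computing the toric `h`-polynomial of the *order-dual* of
the interval `[F,G]` in a face lattice. -/
noncomputable def dualHAux : ℕ → Set V → Set V → Polynomial ℚ
  | 0, _, _ => 1
  | n + 1, F, G =>
      if G = F then 1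
      else ∑ᶠ G' ∈ {G' : Set V | IsFace G G' ∧ F ⊆ G' ∧ G' ≠ F},
        truncG (pdim G - pdim G' - 1) (dualHAux n G' G) *
          (Polynomial.X - 1) ^ (pdim G' - pdim F - 1).toNat

/-- The toric `g`-polynomial of the order-dual of the interval `[F,G]`. -/
noncomputable def dualRelG (F G : Set V) : Polynomial ℚ :=
  truncG (pdim G - pdim F - 1) (dualHAux (pdim G - pdim F + 1).toNat F G)

/-- `g(F*,t)`: the toric `g`-polynomial computed by the usual recursion from the
order-dual of the face lattice of `F`; in particular `toricGDual ∅ = 1`. -/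
noncomputable def toricGDual (F : Set V) : Polynomial ℚ := dualRelG ∅ F

end DualDefs

/-!
The face lattice is Eulerian. To see this, look at the proper faces `H ≥ F` of `G` from a point `z`
in the relative interior of `G`. There are linear functionals `m K` such that `m K ≤ 1` on `G - z`,
with equality exactly on `K - z`. Compare the values `m K v` over the faces `F ≤ K < G`: grouping
the directions `v` by the set of maximising faces cuts the direction space of `G` into
relatively open convex cells, one of dimension `dim H + 1` for each `H`, and the alternating count
of dimensions is additive over such a partition.

In the incidence algebra of an Eulerian poset with rank function `ρ`, put `κ s t = (X - 1) ^ r`,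
where `r` is the rank of `[s, t]`. Reflecting entries (`p ↦ X ^ r * p(1 / X)`) is multiplicative,
and `κ` is inverse to its reflection, which is `κ` with signs `(-1) ^ r`. The toric recursion says
that `g` has entries of degree less than half the rank and that its reflection is `g * κ`. For the
polynomials `f` of the dual intervals the reflection is `κ * f`. Hence, if `g'` is `g` with signs,
the reflection of `p = f * g'` is `κ * p * κ⁻¹`. The entries of `p` have degree less than half the
rank as well, so by induction on the rank `p` is the identity; its entry at `(∅, P)` is the theorem.
-/

section Polynomials

theorem reflect_sum {R ι : Type*} [Semiring R] (N : ℕ) (s : Finset ι) (f : ι → R[X]) :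
    reflect N (∑ i ∈ s, f i) = ∑ i ∈ s, reflect N (f i) := by
  ext k
  simp only [coeff_reflect, finsetSum_coeff]

theorem natDegree_X_sub_one_pow_le (R : Type*) [Ring R] (n : ℕ) :
    ((X - 1 : R[X]) ^ n).natDegree ≤ n := by
  have natDegree_le_one : (X - 1 : R[X]).natDegree ≤ 1 := by
    rw [← C_1]
    exact natDegree_X_sub_C_le _
  simpa using natDegree_pow_le_of_le n natDegree_le_one

theorem reflect_X_sub_one_pow (R : Type*) [CommRing R] (n : ℕ) :
    reflect n ((X - 1 : R[X]) ^ n) = (-1) ^ n * (X - 1) ^ n := by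
  induction n with
  | zero => simp
  | succ n ih =>
    have reflect_linear : reflect 1 (X - 1 : R[X]) = 1 - X := by
      rw [reflect_sub, reflect_one, pow_one, reflect_one_X]
    have natDegree_linear := natDegree_X_sub_one_pow_le R 1
    rw [pow_one] at natDegree_linear
    rw [pow_succ, reflect_mul _ _ (natDegree_X_sub_one_pow_le R n) natDegree_linear, ih,
      reflect_linear]
    ring

theorem eq_zero_of_reflect_eq_self {R : Type*} [Semiring R] {r : ℕ} {p : R[X]}
    (hp : reflect r p = p) (hdeg : 2 * p.natDegree < r) : p = 0 := by
  ext k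
  rw [coeff_zero]
  by_cases hk : p.natDegree < k
  · exact coeff_eq_zero_of_natDegree_lt hk
  · rw [← hp, coeff_reflect, revAt_le (by omega)]
    exact coeff_eq_zero_of_natDegree_lt (by omega)

theorem coeff_truncG (d : ℤ) (h : ℚ[X]) (k : ℕ) :
    (truncG d h).coeff k = if k < d.toNat / 2 + 1 then ((1 - X) * h).coeff k else 0 := by
  have coeff_diff : (h.coeff k - if k = 0 then 0 else h.coeff (k - 1)) =
      ((1 - X) * h).coeff k := by
    cases k <;> simp [sub_mul, coeff_X_mul]
  simp only [truncG, finsetSum_coeff, coeff_C_mul, coeff_X_pow, mul_ite, mul_one, mul_zero,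
    Finset.sum_ite_eq, Finset.mem_range, coeff_diff]

theorem natDegree_truncG_le (d : ℤ) (h : ℚ[X]) : (truncG d h).natDegree ≤ d.toNat / 2 := by
  rw [natDegree_le_iff_coeff_eq_zero]
  intro k hk
  rw [coeff_truncG, if_neg (by omega)]

theorem truncG_one {d : ℤ} (hd : d < 2) : truncG d 1 = 1 := by
  have truncation_bound : d.toNat / 2 + 1 = 1 := by omega
  simp [truncG, truncation_bound]

/-- An antipalindromic polynomial is determined by the lower half of its coefficients, and
`truncG` extracts exactly these from `(1 - X) * h`. -/
theorem reflect_truncG_sub_truncG {d : ℕ} {h : ℚ[X]}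
    (hreflect : reflect (d + 1) ((X - 1) * h) = -((X - 1) * h))
    (hdeg : ((X - 1) * h).natDegree ≤ d + 1) :
    reflect (d + 1) (truncG d h) - truncG d h = (X - 1) * h := by
  set q := (X - 1) * h with hq
  have coeff_trunc (k : ℕ) : (truncG d h).coeff k = if k < d / 2 + 1 then -q.coeff k else 0 := by
    rw [coeff_truncG, Int.toNat_natCast, ← coeff_neg, hq, ← neg_mul, neg_sub]
  have coeff_rev (k : ℕ) : q.coeff (revAt (d + 1) k) = -q.coeff k := by
    rw [← coeff_reflect, hreflect, coeff_neg]
  ext k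
  rw [coeff_sub, coeff_reflect]
  obtain hk | hk := le_or_gt k (d + 1)
  · specialize coeff_rev k
    rw [revAt_le hk] at coeff_rev ⊢
    rw [coeff_trunc, coeff_trunc, coeff_rev]
    obtain lower | middle | upper := lt_trichotomy (2 * k) (d + 1)
    · rw [if_neg (by omega), if_pos (by omega)]
      ring
    · rw [show d + 1 - k = k by omega] at coeff_rev
      rw [if_neg (by omega), if_neg (by omega)]
      linarith
    · rw [if_pos (by omega), if_neg (by omega)]
      ring
  · rw [revAt_eq_self_of_lt hk, sub_self, coeff_eq_zero_of_natDegree_lt (by omega)]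

end Polynomials

section GradedPoset

variable {R α : Type*} [CommRing R] {ρ : α → ℤ} {s t x : α}

/-- The rank of the interval `[s, t]` with respect to the rank function `ρ`. It is meant for
`s ≤ t` and monotone `ρ`, where the truncation at `0` is not seen. -/
def rankDiff (ρ : α → ℤ) (s t : α) : ℕ := (ρ t - ρ s).toNat

theorem rankDiff_self (ρ : α → ℤ) (s : α) : rankDiff ρ s s = 0 := by simp [rankDiff]

variable [PartialOrder α]

theorem rankDiff_add (hρ : Monotone ρ) (hsx : s ≤ x) (hxt : x ≤ t) :
    rankDiff ρ s x + rankDiff ρ x t = rankDiff ρ s t := by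
  have := hρ hsx
  have := hρ hxt
  unfold rankDiff
  omega

theorem rankDiff_pos (hρ : StrictMono ρ) (hst : s < t) : 0 < rankDiff ρ s t := by
  have := hρ hst
  unfold rankDiff
  omega

theorem rankDiff_lt_left (hρ : StrictMono ρ) (hsx : s < x) (hxt : x ≤ t) :
    rankDiff ρ x t < rankDiff ρ s t := by
  have := rankDiff_pos hρ hsx
  have := rankDiff_add hρ.monotone hsx.le hxt
  omega

theorem rankDiff_lt_right (hρ : StrictMono ρ) (hsx : s ≤ x) (hxt : x < t) :
    rankDiff ρ s x < rankDiff ρ s t := by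
  have := rankDiff_pos hρ hxt
  have := rankDiff_add hρ.monotone hsx hxt.le
  omega

/-- The poset `α` with rank function `ρ` is Eulerian: every nontrivial interval has as many
elements of even rank as of odd rank. -/
def IsEulerian [LocallyFiniteOrder α] (ρ : α → ℤ) : Prop :=
  ∀ ⦃s t⦄, s < t → ∑ x ∈ Finset.Icc s t, (-1 : ℤ) ^ rankDiff ρ x t = 0

/-- The entrywise reversal `p(X) ↦ X ^ r * p(1 / X)`, where `r` is the rank of the interval. -/
noncomputable def entryReflect (ρ : α → ℤ) (f : IncidenceAlgebra R[X] α) :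
    IncidenceAlgebra R[X] α where
  toFun s t := reflect (rankDiff ρ s t) (f s t)
  eq_zero_of_not_le' s t hst := by rw [f.apply_eq_zero_of_not_le hst, reflect_zero]

/-- Multiplication of each entry by `(-1) ^ r`, where `r` is the rank of the interval. -/
noncomputable def signTwist (ρ : α → ℤ) (f : IncidenceAlgebra R[X] α) :
    IncidenceAlgebra R[X] α where
  toFun s t := (-1) ^ rankDiff ρ s t * f s t
  eq_zero_of_not_le' s t hst := by rw [f.apply_eq_zero_of_not_le hst, mul_zero]

variable (R) in
/-- The kernel `κ(s, t) = (X - 1) ^ r` of the toric `g`-polynomials, where `r` is the rank of the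
interval. -/
noncomputable def toricKernel (ρ : α → ℤ) : IncidenceAlgebra R[X] α where
  toFun s t := if s ≤ t then (X - 1) ^ rankDiff ρ s t else 0
  eq_zero_of_not_le' _ _ hst := if_neg hst

/-- The entry at each interval is a polynomial of degree at most the rank of the interval. -/
def IsRankBounded (ρ : α → ℤ) (f : IncidenceAlgebra R[X] α) : Prop :=
  ∀ ⦃s t⦄, s ≤ t → (f s t).natDegree ≤ rankDiff ρ s t

theorem entryReflect_apply (f : IncidenceAlgebra R[X] α) :
    entryReflect ρ f s t = reflect (rankDiff ρ s t) (f s t) := rfl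

theorem signTwist_apply (f : IncidenceAlgebra R[X] α) :
    signTwist ρ f s t = (-1) ^ rankDiff ρ s t * f s t := rfl

theorem toricKernel_apply (hst : s ≤ t) : toricKernel R ρ s t = (X - 1) ^ rankDiff ρ s t :=
  if_pos hst

theorem toricKernel_apply_self (s : α) : toricKernel R ρ s s = 1 := by
  rw [toricKernel_apply le_rfl, rankDiff_self, pow_zero]

/-- `f` is unitriangular, and its entries off the diagonal have degree less than half the rank of
the interval. -/
structure IsHalfRankBounded (ρ : α → ℤ) (f : IncidenceAlgebra R[X] α) : Prop where
  apply_self : ∀ s, f s s = 1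
  natDegree_lt : ∀ ⦃s t⦄, s < t → 2 * (f s t).natDegree < rankDiff ρ s t

theorem IsHalfRankBounded.isRankBounded {f : IncidenceAlgebra R[X] α}
    (hf : IsHalfRankBounded ρ f) : IsRankBounded ρ f := by
  intro s t hst
  obtain rfl | hlt := hst.eq_or_lt
  · simp [hf.apply_self]
  · have := hf.natDegree_lt hlt
    omega

theorem isRankBounded_toricKernel : IsRankBounded ρ (toricKernel R ρ) := by
  intro s t hst
  rw [toricKernel_apply hst]
  exact natDegree_X_sub_one_pow_le R _

theorem IsHalfRankBounded.signTwist {f : IncidenceAlgebra R[X] α} (hf : IsHalfRankBounded ρ f) :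
    IsHalfRankBounded ρ (_root_.signTwist ρ f) where
  apply_self s := by rw [signTwist_apply, rankDiff_self, pow_zero, one_mul, hf.apply_self]
  natDegree_lt s t hst := by
    have natDegree_le : (_root_.signTwist ρ f s t).natDegree ≤ (f s t).natDegree := by
      rw [signTwist_apply, ← C_1, ← C_neg, ← C_pow]
      exact natDegree_C_mul_le _ _
    have := hf.natDegree_lt hst
    omega

theorem entryReflect_sub (f g : IncidenceAlgebra R[X] α) :
    entryReflect ρ (f - g) = entryReflect ρ f - entryReflect ρ g := by
  ext s t : 1
  exact reflect_sub _ _ _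

theorem entryReflect_toricKernel :
    entryReflect ρ (toricKernel R ρ) = signTwist ρ (toricKernel R ρ) := by
  ext s t hst : 1
  rw [entryReflect_apply, signTwist_apply, toricKernel_apply hst, reflect_X_sub_one_pow]

theorem entryReflect_signTwist (f : IncidenceAlgebra R[X] α) :
    entryReflect ρ (signTwist ρ f) = signTwist ρ (entryReflect ρ f) := by
  ext s t : 1
  simp only [entryReflect_apply, signTwist_apply]
  rw [← C_1, ← C_neg, ← C_pow, reflect_C_mul]

theorem signTwist_signTwist (f : IncidenceAlgebra R[X] α) :
    signTwist ρ (signTwist ρ f) = f := by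
  ext s t : 1
  rw [signTwist_apply, signTwist_apply, ← mul_assoc, ← mul_pow, neg_one_mul, neg_neg, one_pow,
    one_mul]

theorem entryReflect_one :
    entryReflect ρ (1 : IncidenceAlgebra R[X] α) = 1 := by
  ext s t : 1
  obtain rfl | hst := eq_or_ne s t
  · simp [entryReflect_apply, rankDiff_self]
  · simp [entryReflect_apply, hst]

theorem signTwist_one : signTwist ρ (1 : IncidenceAlgebra R[X] α) = 1 := by
  ext s t : 1
  obtain rfl | hst := eq_or_ne s t
  · simp [signTwist_apply, rankDiff_self]
  · simp [signTwist_apply, hst]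

variable [LocallyFiniteOrder α]

theorem IsRankBounded.entryReflect_mul {f g : IncidenceAlgebra R[X] α}
    (hf : IsRankBounded ρ f) (hg : IsRankBounded ρ g) (hρ : Monotone ρ) :
    entryReflect ρ (f * g) = entryReflect ρ f * entryReflect ρ g := by
  ext s t : 1
  rw [entryReflect_apply, IncidenceAlgebra.mul_apply, IncidenceAlgebra.mul_apply, reflect_sum]
  refine Finset.sum_congr rfl fun x hx => ?_
  rw [Finset.mem_Icc] at hx
  rw [← rankDiff_add hρ hx.1 hx.2, reflect_mul _ _ (hf hx.1) (hg hx.2)]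
  rfl

theorem signTwist_mul (hρ : Monotone ρ) (f g : IncidenceAlgebra R[X] α) :
    signTwist ρ (f * g) = signTwist ρ f * signTwist ρ g := by
  ext s t : 1
  rw [signTwist_apply, IncidenceAlgebra.mul_apply, IncidenceAlgebra.mul_apply, Finset.mul_sum]
  refine Finset.sum_congr rfl fun x hx => ?_
  rw [Finset.mem_Icc] at hx
  rw [signTwist_apply, signTwist_apply, ← rankDiff_add hρ hx.1 hx.2]
  ring

theorem IsEulerian.toricKernel_mul_signTwist (hE : IsEulerian ρ) (hρ : Monotone ρ) :
    toricKernel R ρ * signTwist ρ (toricKernel R ρ) = 1 := by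
  ext s t hst : 1
  obtain rfl | hne := eq_or_ne s t
  · simp [signTwist_apply, toricKernel_apply_self, rankDiff_self]
  have term_eq (x) (hx : x ∈ Finset.Icc s t) :
      toricKernel R ρ s x * signTwist ρ (toricKernel R ρ) x t =
        (((-1) ^ rankDiff ρ x t : ℤ) : R[X]) * (X - 1) ^ rankDiff ρ s t := by
    rw [Finset.mem_Icc] at hx
    rw [signTwist_apply, toricKernel_apply hx.1, toricKernel_apply hx.2,
      ← rankDiff_add hρ hx.1 hx.2]
    push_cast
    ring
  rw [IncidenceAlgebra.mul_apply, Finset.sum_congr rfl term_eq, ← Finset.sum_mul,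
    ← Int.cast_sum, hE (hst.lt_of_ne hne), Int.cast_zero, zero_mul, IncidenceAlgebra.one_apply,
    if_neg hne]

theorem IsEulerian.signTwist_toricKernel_mul (hE : IsEulerian ρ) (hρ : Monotone ρ) :
    signTwist ρ (toricKernel R ρ) * toricKernel R ρ = 1 := by
  have := congrArg (signTwist ρ) (hE.toricKernel_mul_signTwist (R := R) hρ)
  rwa [signTwist_mul hρ, signTwist_signTwist, signTwist_one] at this

theorem IsHalfRankBounded.mul {f g : IncidenceAlgebra R[X] α} (hf : IsHalfRankBounded ρ f)
    (hg : IsHalfRankBounded ρ g) (hρ : StrictMono ρ) : IsHalfRankBounded ρ (f * g) where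
  apply_self s := by simp [hf.apply_self, hg.apply_self]
  natDegree_lt s t hst := by
    suffices ((f * g) s t).natDegree ≤ (rankDiff ρ s t - 1) / 2 by
      have := rankDiff_pos hρ hst
      omega
    rw [IncidenceAlgebra.mul_apply]
    refine natDegree_sum_le_of_forall_le _ _ fun x hx => natDegree_mul_le.trans ?_
    rw [Finset.mem_Icc] at hx
    have rank_add := rankDiff_add hρ.monotone hx.1 hx.2
    obtain rfl | hsx := hx.1.eq_or_lt
    · have := hg.natDegree_lt hst
      simp only [hf.apply_self, natDegree_one]
      omega
    have := hf.natDegree_lt hsx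
    obtain rfl | hxt := hx.2.eq_or_lt
    · simp only [hg.apply_self, natDegree_one]
      omega
    have := hg.natDegree_lt hxt
    omega

/-- `g` is a right Kazhdan–Lusztig–Stanley function for the toric kernel: reversing the entries
multiplies it by the kernel on the right. -/
structure IsRightKLS (ρ : α → ℤ) (g : IncidenceAlgebra R[X] α) : Prop
    extends IsHalfRankBounded ρ g where
  entryReflect_eq : entryReflect ρ g = g * toricKernel R ρ

/-- `f` is a left Kazhdan–Lusztig–Stanley function for the toric kernel: reversing the entries
multiplies it by the kernel on the left. -/
structure IsLeftKLS (ρ : α → ℤ) (f : IncidenceAlgebra R[X] α) : Prop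
    extends IsHalfRankBounded ρ f where
  entryReflect_eq : entryReflect ρ f = toricKernel R ρ * f

theorem IsRightKLS.entryReflect_signTwist_mul {g : IncidenceAlgebra R[X] α}
    (hg : IsRightKLS ρ g) (hE : IsEulerian ρ) (hρ : Monotone ρ) :
    entryReflect ρ (signTwist ρ g) * toricKernel R ρ = signTwist ρ g := by
  rw [entryReflect_signTwist, hg.entryReflect_eq, signTwist_mul hρ, mul_assoc,
    hE.signTwist_toricKernel_mul hρ, mul_one]

/-- By induction on the rank of `[s, t]`, the two products at `[s, t]` reduce to their terms
involving `d s t`, so that `d s t` is palindromic of degree less than half its centre. -/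
theorem eq_zero_of_entryReflect_mul_toricKernel_eq {d : IncidenceAlgebra R[X] α}
    (hρ : StrictMono ρ) (hself : ∀ s, d s s = 0)
    (hdeg : ∀ ⦃s t⦄, s < t → 2 * (d s t).natDegree < rankDiff ρ s t)
    (hreflect : entryReflect ρ d * toricKernel R ρ = toricKernel R ρ * d) : d = 0 := by
  suffices ∀ n s t, s ≤ t → rankDiff ρ s t = n → d s t = 0 from
    IncidenceAlgebra.ext fun s t hst => this _ s t hst rfl
  intro n
  induction n using Nat.strong_induction_on with | _ n ih
  rintro s t hst rfl
  obtain rfl | hlt := hst.eq_or_lt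
  · exact hself s
  have zero_below {x} (hsx : s ≤ x) (hxt : x < t) : d s x = 0 :=
    ih _ (rankDiff_lt_right hρ hsx hxt) s x hsx rfl
  have zero_above {x} (hsx : s < x) (hxt : x ≤ t) : d x t = 0 :=
    ih _ (rankDiff_lt_left hρ hsx hxt) x t hxt rfl
  have left_eq : (entryReflect ρ d * toricKernel R ρ) s t = reflect (rankDiff ρ s t) (d s t) := by
    rw [IncidenceAlgebra.mul_apply, Finset.sum_eq_single_of_mem t (Finset.right_mem_Icc.2 hst),
      toricKernel_apply_self, mul_one, entryReflect_apply]
    intro x hx hxt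
    rw [Finset.mem_Icc] at hx
    rw [entryReflect_apply, zero_below hx.1 (hx.2.lt_of_ne hxt), reflect_zero, zero_mul]
  have right_eq : (toricKernel R ρ * d) s t = d s t := by
    rw [IncidenceAlgebra.mul_apply, Finset.sum_eq_single_of_mem s (Finset.left_mem_Icc.2 hst),
      toricKernel_apply_self, one_mul]
    intro x hx hxs
    rw [Finset.mem_Icc] at hx
    rw [zero_above (hx.1.lt_of_ne' hxs) hx.2, mul_zero]
  refine eq_zero_of_reflect_eq_self ?_ (hdeg hlt)
  rw [← left_eq, hreflect, right_eq]

theorem IsHalfRankBounded.eq_one {f : IncidenceAlgebra R[X] α} (hf : IsHalfRankBounded ρ f)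
    (hρ : StrictMono ρ)
    (hreflect : entryReflect ρ f * toricKernel R ρ = toricKernel R ρ * f) : f = 1 := by
  rw [← sub_eq_zero]
  apply eq_zero_of_entryReflect_mul_toricKernel_eq hρ
  · intro s
    simp [hf.apply_self]
  · intro s t hst
    rw [IncidenceAlgebra.sub_apply, IncidenceAlgebra.one_apply, if_neg hst.ne, sub_zero]
    exact hf.natDegree_lt hst
  · rw [entryReflect_sub, entryReflect_one, sub_mul, mul_sub, hreflect, one_mul, mul_one]

theorem IsLeftKLS.mul_signTwist_eq_one {f g : IncidenceAlgebra R[X] α} (hf : IsLeftKLS ρ f)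
    (hg : IsRightKLS ρ g) (hE : IsEulerian ρ) (hρ : StrictMono ρ) :
    f * signTwist ρ g = 1 := by
  have twist_bounded := hg.toIsHalfRankBounded.signTwist
  apply (hf.toIsHalfRankBounded.mul twist_bounded hρ).eq_one hρ
  rw [hf.isRankBounded.entryReflect_mul twist_bounded.isRankBounded hρ.monotone,
    hf.entryReflect_eq, mul_assoc, mul_assoc, hg.entryReflect_signTwist_mul hE hρ.monotone]

end GradedPoset

section Dual

variable {R α : Type*} {ρ : α → ℤ}

/-- The rank function `-ρ` on the order dual, for which intervals keep their rank. -/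
def dualRank (ρ : α → ℤ) (s : αᵒᵈ) : ℤ := -ρ (OrderDual.ofDual s)

theorem rankDiff_dualRank (s t : αᵒᵈ) :
    rankDiff (dualRank ρ) s t = rankDiff ρ (OrderDual.ofDual t) (OrderDual.ofDual s) := by
  unfold rankDiff dualRank
  congr 1
  ring

variable [PartialOrder α]

theorem strictMono_dualRank (hρ : StrictMono ρ) : StrictMono (dualRank ρ) :=
  fun _ _ hst => neg_lt_neg (hρ (OrderDual.ofDual_lt_ofDual.2 hst))

theorem isEulerian_dualRank [LocallyFiniteOrder α] (hE : IsEulerian ρ) (hρ : Monotone ρ) :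
    IsEulerian (dualRank ρ) := by
  intro s t hst
  have sign_eq (x) (hx : x ∈ Finset.Icc (OrderDual.ofDual t) (OrderDual.ofDual s)) :
      (-1 : ℤ) ^ rankDiff (dualRank ρ) (OrderDual.toDual x) t =
        (-1) ^ rankDiff ρ (OrderDual.ofDual t) (OrderDual.ofDual s) *
          (-1) ^ rankDiff ρ x (OrderDual.ofDual s) := by
    rw [Finset.mem_Icc] at hx
    rw [rankDiff_dualRank, ← rankDiff_add hρ hx.1 hx.2, pow_add, mul_assoc, ← mul_pow,
      neg_one_mul, neg_neg, one_pow, mul_one, OrderDual.ofDual_toDual]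
  rw [Finset.Icc_orderDual_def, Finset.sum_map]
  refine (Finset.sum_congr rfl sign_eq).trans ?_
  rw [← Finset.mul_sum, hE (OrderDual.ofDual_lt_ofDual.2 hst), mul_zero]

variable [CommRing R] {f g : IncidenceAlgebra R[X] α}

/-- The incidence function on the order dual with the same value on each interval. -/
noncomputable def dualIncidence (f : IncidenceAlgebra R[X] α) : IncidenceAlgebra R[X] αᵒᵈ where
  toFun s t := f (OrderDual.ofDual t) (OrderDual.ofDual s)
  eq_zero_of_not_le' s t hst :=
    f.apply_eq_zero_of_not_le (a := OrderDual.ofDual t) (b := OrderDual.ofDual s) hst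

theorem dualIncidence_injective :
    Function.Injective (dualIncidence : IncidenceAlgebra R[X] α → IncidenceAlgebra R[X] αᵒᵈ) :=
  fun _ _ hfg => IncidenceAlgebra.ext fun s t _ =>
    congrArg (fun h => h (OrderDual.toDual t) (OrderDual.toDual s)) hfg

theorem dualIncidence_entryReflect :
    dualIncidence (entryReflect ρ f) = entryReflect (dualRank ρ) (dualIncidence f) := by
  ext s t : 1
  rw [entryReflect_apply, rankDiff_dualRank]
  rfl

theorem dualIncidence_toricKernel :
    dualIncidence (toricKernel R ρ) = toricKernel R (dualRank ρ) := by
  ext s t hst : 1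
  rw [toricKernel_apply hst, rankDiff_dualRank]
  exact toricKernel_apply (OrderDual.ofDual_le_ofDual.2 hst)

variable [LocallyFiniteOrder α]

theorem dualIncidence_mul : dualIncidence (f * g) = dualIncidence g * dualIncidence f := by
  ext s t : 1
  rw [IncidenceAlgebra.mul_apply, Finset.Icc_orderDual_def, Finset.sum_map]
  exact Finset.sum_congr rfl fun x _ => mul_comm _ _

theorem IsRightKLS.isLeftKLS_of_dual (hf : IsRightKLS (dualRank ρ) (dualIncidence f)) :
    IsLeftKLS ρ f where
  apply_self s := hf.apply_self (OrderDual.toDual s)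
  natDegree_lt s t hst := by
    have := hf.natDegree_lt (OrderDual.toDual_lt_toDual.2 hst)
    rwa [rankDiff_dualRank] at this
  entryReflect_eq := dualIncidence_injective <| by
    rw [dualIncidence_entryReflect, hf.entryReflect_eq, dualIncidence_mul,
      dualIncidence_toricKernel]

end Dual

section ToricG

variable {α : Type*} [PartialOrder α] [LocallyFiniteOrder α] {ρ : α → ℤ} {s t : α}
  {g : IncidenceAlgebra ℚ[X] α}

/-- `g s t` is the toric `g`-polynomial of the interval `[s, t]`; the polytope that the interval
stands for has dimension one less than the rank. -/
structure IsToricG (ρ : α → ℤ) (g : IncidenceAlgebra ℚ[X] α) : Prop where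
  apply_self : ∀ s, g s s = 1
  apply_of_lt : ∀ ⦃s t⦄, s < t → g s t = truncG (ρ t - ρ s - 1)
    (∑ x ∈ Finset.Ico s t, g s x * (X - 1) ^ (ρ t - ρ x - 1).toNat)

theorem isToricG_dualIncidence (hself : ∀ s, g s s = 1)
    (hlt : ∀ ⦃s t⦄, s < t → g s t = truncG (ρ t - ρ s - 1)
      (∑ x ∈ Finset.Ioc s t, g x t * (X - 1) ^ (ρ x - ρ s - 1).toNat)) :
    IsToricG (dualRank ρ) (dualIncidence g) where
  apply_self s := hself (OrderDual.ofDual s)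
  apply_of_lt s t hst := by
    have rank_sub (x y : αᵒᵈ) :
        dualRank ρ y - dualRank ρ x = ρ (OrderDual.ofDual x) - ρ (OrderDual.ofDual y) :=
      neg_sub_neg _ _
    rw [Finset.Ico_orderDual_def, Finset.sum_map]
    simp only [rank_sub]
    exact hlt (OrderDual.ofDual_lt_ofDual.2 hst)

theorem IsToricG.isHalfRankBounded (hg : IsToricG ρ g) (hρ : StrictMono ρ) :
    IsHalfRankBounded ρ g where
  apply_self := hg.apply_self
  natDegree_lt s t hst := by
    rw [hg.apply_of_lt hst]
    have natDegree_le := natDegree_truncG_le (ρ t - ρ s - 1)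
      (∑ x ∈ Finset.Ico s t, g s x * (X - 1) ^ (ρ t - ρ x - 1).toNat)
    have := hρ hst
    unfold rankDiff
    omega

theorem X_sub_one_mul_sum_Ico (hρ : StrictMono ρ) :
    (X - 1) * ∑ x ∈ Finset.Ico s t, g s x * (X - 1) ^ (ρ t - ρ x - 1).toNat =
      ∑ x ∈ Finset.Ico s t, g s x * toricKernel ℚ ρ x t := by
  rw [Finset.mul_sum]
  refine Finset.sum_congr rfl fun x hx => ?_
  have hxt := (Finset.mem_Ico.1 hx).2
  have rank_eq : rankDiff ρ x t = (ρ t - ρ x - 1).toNat + 1 := by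
    have := hρ hxt
    unfold rankDiff
    omega
  rw [toricKernel_apply hxt.le, rank_eq]
  ring

theorem mul_toricKernel_apply (hst : s ≤ t) :
    (g * toricKernel ℚ ρ) s t = ∑ x ∈ Finset.Ico s t, g s x * toricKernel ℚ ρ x t + g s t := by
  rw [IncidenceAlgebra.mul_apply, ← Finset.sum_Ico_add_eq_sum_Icc hst, toricKernel_apply_self,
    mul_one]

theorem reflect_sum_Ico_mul_toricKernel (hg : IsRankBounded ρ g) (hE : IsEulerian ρ)
    (hρ : Monotone ρ) (hst : s < t)
    (hbelow : ∀ x ∈ Finset.Ico s t, entryReflect ρ g s x = (g * toricKernel ℚ ρ) s x) :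
    reflect (rankDiff ρ s t) (∑ x ∈ Finset.Ico s t, g s x * toricKernel ℚ ρ x t) =
      -∑ x ∈ Finset.Ico s t, g s x * toricKernel ℚ ρ x t := by
  set κ := toricKernel ℚ ρ
  have reflect_term (x) (hx : x ∈ Finset.Ico s t) :
      reflect (rankDiff ρ s t) (g s x * κ x t) = (g * κ) s x * signTwist ρ κ x t := by
    have hx' := Finset.mem_Ico.1 hx
    rw [← rankDiff_add hρ hx'.1 hx'.2.le,
      reflect_mul _ _ (hg hx'.1) (isRankBounded_toricKernel hx'.2.le), ← entryReflect_apply,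
      ← entryReflect_apply, hbelow x hx, entryReflect_toricKernel]
  have twist_self : signTwist ρ κ t t = 1 := by
    rw [signTwist_apply, rankDiff_self, toricKernel_apply_self, pow_zero, one_mul]
  have telescope : ∑ x ∈ Finset.Ico s t, (g * κ) s x * signTwist ρ κ x t + (g * κ) s t = g s t := by
    have := congrArg (fun f => f s t) (mul_assoc g κ (signTwist ρ κ))
    rwa [hE.toricKernel_mul_signTwist hρ, mul_one, IncidenceAlgebra.mul_apply,
      ← Finset.sum_Ico_add_eq_sum_Icc hst.le, twist_self, mul_one] at this
  rw [reflect_sum, Finset.sum_congr rfl reflect_term, ← sub_eq_zero]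
  rw [mul_toricKernel_apply hst.le] at telescope
  linear_combination telescope

theorem IsToricG.isRightKLS (hg : IsToricG ρ g) (hE : IsEulerian ρ) (hρ : StrictMono ρ) :
    IsRightKLS ρ g where
  toIsHalfRankBounded := hg.isHalfRankBounded hρ
  entryReflect_eq := by
    suffices ∀ n s t, s ≤ t → rankDiff ρ s t = n →
        entryReflect ρ g s t = (g * toricKernel ℚ ρ) s t from
      IncidenceAlgebra.ext fun s t hst => this _ s t hst rfl
    intro n
    induction n using Nat.strong_induction_on with | _ n ih
    rintro s t hst rfl
    obtain rfl | hlt := hst.eq_or_lt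
    · simp [entryReflect_apply, rankDiff_self, hg.apply_self, toricKernel_apply_self]
    have hbounded := (hg.isHalfRankBounded hρ).isRankBounded
    have reflect_eq_neg := reflect_sum_Ico_mul_toricKernel hbounded hE hρ.monotone hlt fun x hx =>
      have hx' := Finset.mem_Ico.1 hx
      ih _ (rankDiff_lt_right hρ hx'.1 hx'.2) s x hx'.1 rfl
    have natDegree_le :
        (∑ x ∈ Finset.Ico s t, g s x * toricKernel ℚ ρ x t).natDegree ≤ rankDiff ρ s t := by
      refine natDegree_sum_le_of_forall_le _ _ fun x hx => natDegree_mul_le.trans ?_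
      have hx' := Finset.mem_Ico.1 hx
      rw [← rankDiff_add hρ.monotone hx'.1 hx'.2.le]
      exact add_le_add (hbounded hx'.1) (isRankBounded_toricKernel hx'.2.le)
    obtain ⟨d, hd⟩ : ∃ d : ℕ, ρ t - ρ s - 1 = d :=
      Int.eq_ofNat_of_zero_le (by have := hρ hlt; omega)
    have rank_eq : rankDiff ρ s t = d + 1 := by
      unfold rankDiff
      omega
    rw [rank_eq, ← X_sub_one_mul_sum_Ico hρ] at reflect_eq_neg natDegree_le
    have := reflect_truncG_sub_truncG reflect_eq_neg natDegree_le
    rw [← hd, ← hg.apply_of_lt hlt, ← rank_eq, X_sub_one_mul_sum_Ico hρ, sub_eq_iff_eq_add] at this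
    rw [mul_toricKernel_apply hst, entryReflect_apply, this]

theorem IsToricG.mul_signTwist_eq_one {f : IncidenceAlgebra ℚ[X] α}
    (hf : IsToricG (dualRank ρ) (dualIncidence f)) (hg : IsToricG ρ g) (hE : IsEulerian ρ)
    (hρ : StrictMono ρ) : f * signTwist ρ g = 1 :=
  have f_dual := hf.isRightKLS (isEulerian_dualRank hE hρ.monotone) (strictMono_dualRank hρ)
  f_dual.isLeftKLS_of_dual.mul_signTwist_eq_one (hg.isRightKLS hE hρ) hE hρ

theorem IsToricG.sum_mul_signTwist_eq_zero {f : IncidenceAlgebra ℚ[X] α}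
    (hf : IsToricG (dualRank ρ) (dualIncidence f)) (hg : IsToricG ρ g) (hE : IsEulerian ρ)
    (hρ : StrictMono ρ) (hst : s ≠ t) : ∑ x ∈ Finset.Icc s t, f s x * signTwist ρ g x t = 0 := by
  rw [← IncidenceAlgebra.mul_apply, hf.mul_signTwist_eq_one hg hE hρ, IncidenceAlgebra.one_apply,
    if_neg hst]

end ToricG

section RelativelyOpen

open Topology Module

variable {V : Type*} [AddCommGroup V] [Module ℝ V] {C : Set V} {x v : V}

/-- A convex set that is open in its affine span. As `V` carries no topology, openness is expressed
by letting every segment in `C` be extended slightly beyond its endpoints. -/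
structure IsRelOpenConvex (C : Set V) : Prop where
  convex : Convex ℝ C
  eventually_mem : ∀ x ∈ C, ∀ y ∈ C, ∀ᶠ ε in 𝓝 (0 : ℝ), x + ε • (y - x) ∈ C

/-- The part of `V` where the linear functional `l` has sign `σ`. -/
def signRegion (l : V →ₗ[ℝ] ℝ) (σ : SignType) : Set V := {x | SignType.sign (l x) = σ}

theorem mem_signRegion_zero {l : V →ₗ[ℝ] ℝ} : x ∈ signRegion l 0 ↔ l x = 0 := sign_eq_zero_iff

theorem tendsto_const_mul_nhds_zero (c : ℝ) : Filter.Tendsto (c * ·) (𝓝 0) (𝓝 (0 : ℝ)) := by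
  simpa using (continuous_const_mul c).tendsto 0

theorem eventually_add_smul_mem_of_mem_span {A : Set V} (hC : Convex ℝ C) (hx : x ∈ C)
    (hA : ∀ v ∈ A, ∀ᶠ ε in 𝓝 (0 : ℝ), x + ε • v ∈ C) (hv : v ∈ Submodule.span ℝ A) :
    ∀ᶠ ε in 𝓝 (0 : ℝ), x + ε • v ∈ C := by
  induction hv using Submodule.span_induction with
  | mem v hv => exact hA v hv
  | zero => simp [hx]
  | add u v _ _ hu hv =>
    filter_upwards [(tendsto_const_mul_nhds_zero 2).eventually hu,
      (tendsto_const_mul_nhds_zero 2).eventually hv] with ε hu hv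
    have midpoint_mem := hC hu hv (a := 1 / 2) (b := 1 / 2) (by norm_num) (by norm_num)
      (by norm_num)
    convert midpoint_mem using 1
    module
  | smul a v _ hv =>
    filter_upwards [(tendsto_const_mul_nhds_zero a).eventually hv] with ε hv
    rwa [smul_smul, mul_comm]

theorem IsRelOpenConvex.eventually_add_smul_mem (hC : IsRelOpenConvex C) (hx : x ∈ C)
    (hv : v ∈ vectorSpan ℝ C) : ∀ᶠ ε in 𝓝 (0 : ℝ), x + ε • v ∈ C := by
  rw [vectorSpan_eq_span_vsub_set_right ℝ hx] at hv
  refine eventually_add_smul_mem_of_mem_span hC.convex hx ?_ hv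
  rintro _ ⟨y, hy, rfl⟩
  exact hC.eventually_mem x hx y hy

theorem mem_vectorSpan_of_eventually (hx : x ∈ C) (hv : ∀ᶠ ε in 𝓝 (0 : ℝ), x + ε • v ∈ C) :
    v ∈ vectorSpan ℝ C := by
  obtain ⟨ε, hmem, hε⟩ := ((hv.filter_mono nhdsWithin_le_nhds).and
    (eventually_mem_nhdsWithin (s := {0}ᶜ))).exists
  have smul_mem := vsub_mem_vectorSpan ℝ hmem hx
  rw [vsub_eq_sub, add_sub_cancel_left] at smul_mem
  exact (Submodule.smul_mem_iff _ hε).1 smul_mem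

theorem convex_signRegion (l : V →ₗ[ℝ] ℝ) (σ : SignType) : Convex ℝ (signRegion l σ) := by
  have convex_sign : Convex ℝ {r : ℝ | SignType.sign r = σ} := by
    cases σ
    · simp only [SignType.zero_eq_zero, sign_eq_zero_iff]
      exact convex_singleton 0
    · simp only [SignType.neg_eq_neg_one, sign_eq_neg_one_iff]
      exact convex_Iio 0
    · simp only [SignType.pos_eq_one, sign_eq_one_iff]
      exact convex_Ioi 0
  exact convex_sign.linear_preimage l

theorem eventually_sign_eq {l : V →ₗ[ℝ] ℝ} (h : l x = 0 → l v = 0) :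
    ∀ᶠ ε in 𝓝 (0 : ℝ), x + ε • v ∈ signRegion l (SignType.sign (l x)) := by
  by_cases hx : l x = 0
  · simp [signRegion, hx, h hx]
  have tendsto_map : Filter.Tendsto (fun ε : ℝ => l (x + ε • v)) (𝓝 0) (𝓝 (l x)) := by
    have : Continuous fun ε : ℝ => l x + ε * l v := by fun_prop
    simpa using this.tendsto 0
  exact ((continuousAt_sign_of_ne_zero hx).tendsto.comp tendsto_map).eventually_mem
    ((isOpen_discrete {SignType.sign (l x)}).mem_nhds rfl)

theorem IsRelOpenConvex.inter_signRegion (hC : IsRelOpenConvex C) (l : V →ₗ[ℝ] ℝ)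
    (σ : SignType) : IsRelOpenConvex (C ∩ signRegion l σ) where
  convex := hC.convex.inter (convex_signRegion l σ)
  eventually_mem := by
    rintro x ⟨hx, rfl⟩ y ⟨hy, hsign⟩
    refine (hC.eventually_mem x hx y hy).and (eventually_sign_eq fun hlx => ?_)
    rw [hlx, sign_zero, mem_signRegion_zero] at hsign
    rw [map_sub, hsign, hlx, sub_zero]

theorem IsRelOpenConvex.mem_vectorSpan_inter_signRegion (hC : IsRelOpenConvex C)
    {l : V →ₗ[ℝ] ℝ} (hx : x ∈ C) (hv : v ∈ vectorSpan ℝ C) (h : l x = 0 → l v = 0) :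
    v ∈ vectorSpan ℝ (C ∩ signRegion l (SignType.sign (l x))) :=
  mem_vectorSpan_of_eventually ⟨hx, rfl⟩
    ((hC.eventually_add_smul_mem hx hv).and (eventually_sign_eq h))

theorem IsRelOpenConvex.vectorSpan_inter_signRegion (hC : IsRelOpenConvex C) {l : V →ₗ[ℝ] ℝ}
    (hx : x ∈ C) (hlx : l x ≠ 0) :
    vectorSpan ℝ (C ∩ signRegion l (SignType.sign (l x))) = vectorSpan ℝ C :=
  le_antisymm (vectorSpan_mono ℝ Set.inter_subset_left) fun _ hv =>
    hC.mem_vectorSpan_inter_signRegion hx hv fun h => absurd h hlx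

theorem IsRelOpenConvex.vectorSpan_inter_signRegion_zero (hC : IsRelOpenConvex C)
    {l : V →ₗ[ℝ] ℝ} (hx : x ∈ C) (hlx : l x = 0) :
    vectorSpan ℝ (C ∩ signRegion l 0) = vectorSpan ℝ C ⊓ LinearMap.ker l := by
  refine le_antisymm (le_inf (vectorSpan_mono ℝ Set.inter_subset_left) ?_) fun v hv => ?_
  · refine Submodule.span_le.2 ?_
    rintro _ ⟨y, ⟨-, hy⟩, z, ⟨-, hz⟩, rfl⟩
    simp [mem_signRegion_zero.1 hy, mem_signRegion_zero.1 hz]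
  · have := hC.mem_vectorSpan_inter_signRegion hx hv.1 fun _ => hv.2
    rwa [hlx, sign_zero] at this

theorem finrank_inf_ker_add_one {W : Submodule ℝ V} [FiniteDimensional ℝ W] {l : V →ₗ[ℝ] ℝ}
    (hv : v ∈ W) (hlv : l v ≠ 0) :
    finrank ℝ (W ⊓ LinearMap.ker l : Submodule ℝ V) + 1 = finrank ℝ W := by
  have hne : l.domRestrict W ≠ 0 := fun h => hlv (LinearMap.congr_fun h ⟨v, hv⟩)
  have := Module.Dual.finrank_ker_add_one_of_ne_zero hne
  rw [LinearMap.ker_domRestrict] at this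
  rw [← this, ← (Submodule.comapSubtypeEquivOfLe inf_le_left).finrank_eq, Submodule.comap_inf,
    Submodule.comap_subtype_self, top_inf_eq]

/-- The Euler characteristic with compact supports of a relatively open convex set. -/
noncomputable def eulerSign (C : Set V) : ℤ :=
  if C = ∅ then 0 else (-1) ^ finrank ℝ (vectorSpan ℝ C)

theorem eulerSign_empty : eulerSign (∅ : Set V) = 0 := if_pos rfl

theorem eulerSign_of_mem (hx : x ∈ C) : eulerSign C = (-1) ^ finrank ℝ (vectorSpan ℝ C) :=
  if_neg (Set.nonempty_of_mem hx).ne_empty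

theorem exists_sign_eq_of_eventually_nhds_zero {p : ℝ → Prop} (hp : ∀ᶠ ε in 𝓝 0, p ε)
    (σ : SignType) : ∃ ε, p ε ∧ SignType.sign ε = σ := by
  cases σ
  · exact ⟨0, hp.self_of_nhds, sign_zero⟩
  · obtain ⟨ε, hpε, hε⟩ := ((hp.filter_mono nhdsWithin_le_nhds).and
      (eventually_mem_nhdsWithin (s := Set.Iio 0))).exists
    exact ⟨ε, hpε, sign_neg hε⟩
  · obtain ⟨ε, hpε, hε⟩ := ((hp.filter_mono nhdsWithin_le_nhds).and
      (eventually_mem_nhdsWithin (s := Set.Ioi 0))).exists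
    exact ⟨ε, hpε, sign_pos hε⟩

theorem exists_mem_eq_zero_of_sign_ne (hC : Convex ℝ C) {l : V →ₗ[ℝ] ℝ} {y : V} (hx : x ∈ C)
    (hy : y ∈ C) (hsign : SignType.sign (l x) ≠ SignType.sign (l y)) : ∃ z ∈ C, l z = 0 := by
  have image_ordConnected : (l '' C).OrdConnected := (hC.linear_image l).ordConnected
  have zero_mem_uIcc : (0 : ℝ) ∈ Set.uIcc (l x) (l y) := by
    rw [Set.mem_uIcc]
    by_contra! h
    grind [sign_apply]
  exact image_ordConnected.uIcc_subset (Set.mem_image_of_mem l hx) (Set.mem_image_of_mem l hy)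
    zero_mem_uIcc

theorem IsRelOpenConvex.exists_mem_signRegion (hC : IsRelOpenConvex C) {l : V →ₗ[ℝ] ℝ} {y : V}
    (hx : x ∈ C) (hlx : l x = 0) (hy : y ∈ C) (hly : l y ≠ 0) (σ : SignType) :
    ∃ z ∈ C, SignType.sign (l z) = σ := by
  obtain ⟨ε, hmem, hε⟩ := exists_sign_eq_of_eventually_nhds_zero (hC.eventually_mem x hx y hy)
    (σ * SignType.sign (l y))
  refine ⟨_, hmem, ?_⟩
  have sign_mul_self : SignType.sign (l y) * SignType.sign (l y) = 1 := by
    rw [← sign_mul, sign_pos (mul_self_pos.2 hly)]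
  rw [map_add, map_smul, map_sub, hlx, sub_zero, zero_add, smul_eq_mul, sign_mul, hε, mul_assoc,
    sign_mul_self, mul_one]

theorem IsRelOpenConvex.eulerSign_eq_sum_signRegion (hC : IsRelOpenConvex C)
    [FiniteDimensional ℝ (vectorSpan ℝ C)] (l : V →ₗ[ℝ] ℝ) :
    eulerSign C = ∑ σ : SignType, eulerSign (C ∩ signRegion l σ) := by
  by_cases hconst : ∃ τ, C ⊆ signRegion l τ
  · obtain ⟨τ, hτ⟩ := hconst
    rw [Fintype.sum_eq_single τ, Set.inter_eq_left.2 hτ]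
    intro σ hσ
    have inter_empty : C ∩ signRegion l σ = ∅ :=
      Set.eq_empty_of_forall_notMem fun x hx => hσ (hx.2.symm.trans (hτ hx.1))
    rw [inter_empty, eulerSign_empty]
  · push Not at hconst
    obtain ⟨p, hp, hp_ne⟩ := Set.not_subset.1 (hconst 0)
    obtain ⟨q, hq, hq_ne⟩ := Set.not_subset.1 (hconst (SignType.sign (l p)))
    obtain ⟨z, hz, hlz⟩ := exists_mem_eq_zero_of_sign_ne hC.convex hq hp hq_ne
    have eulerSign_of_ne (σ : SignType) (hσ : σ ≠ 0) :
        eulerSign (C ∩ signRegion l σ) = eulerSign C := by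
      obtain ⟨w, hw, rfl⟩ :=
        hC.exists_mem_signRegion hz hlz hp (fun h => hp_ne (mem_signRegion_zero.2 h)) σ
      rw [eulerSign_of_mem (show w ∈ C ∩ signRegion l _ from ⟨hw, rfl⟩), eulerSign_of_mem hw,
        hC.vectorSpan_inter_signRegion hw (sign_ne_zero.1 hσ)]
    have eulerSign_zero : eulerSign (C ∩ signRegion l 0) = -eulerSign C := by
      have hlp : l (p - z) ≠ 0 := by
        rw [map_sub, hlz, sub_zero]
        exact fun h => hp_ne (mem_signRegion_zero.2 h)
      rw [eulerSign_of_mem (Set.mem_inter hz (mem_signRegion_zero.2 hlz)), eulerSign_of_mem hz,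
        hC.vectorSpan_inter_signRegion_zero hz hlz,
        ← finrank_inf_ker_add_one (vsub_mem_vectorSpan ℝ hp hz) hlp, pow_succ, mul_neg_one, neg_neg]
    simp [SignType.univ_eq, eulerSign_zero, eulerSign_of_ne]

theorem eulerSign_eq_sum_of_separated {ι : Type*} {I : Finset ι} {D : ι → Set V}
    (A : Finset (V →ₗ[ℝ] ℝ)) (hC : IsRelOpenConvex C) [FiniteDimensional ℝ (vectorSpan ℝ C)]
    (hD : ∀ i ∈ I, IsRelOpenConvex (D i)) (hsubset : ∀ i ∈ I, D i ⊆ C)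
    (hcover : ∀ x ∈ C, ∃ i ∈ I, x ∈ D i)
    (hsep : ∀ i ∈ I, ∀ j ∈ I, ∀ x ∈ D i, ∀ y ∈ D j,
      (∀ l ∈ A, SignType.sign (l x) = SignType.sign (l y)) → i = j) :
    eulerSign C = ∑ i ∈ I, eulerSign (D i) := by
  induction A using Finset.induction_on generalizing C D with
  | empty =>
    simp only [Finset.notMem_empty, IsEmpty.forall_iff, implies_true, forall_const] at hsep
    obtain rfl | ⟨x, hx⟩ := C.eq_empty_or_nonempty
    · refine eulerSign_empty.trans (Finset.sum_eq_zero fun i hi => ?_).symm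
      rw [Set.subset_empty_iff.1 (hsubset i hi), eulerSign_empty]
    obtain ⟨i, hi, hxi⟩ := hcover x hx
    have D_eq : D i = C := (hsubset i hi).antisymm fun y hy => by
      obtain ⟨j, hj, hyj⟩ := hcover y hy
      rwa [hsep i hi j hj x hxi y hyj]
    rw [Finset.sum_eq_single_of_mem i hi, D_eq]
    intro j hj hji
    have D_empty : D j = ∅ :=
      Set.eq_empty_of_forall_notMem fun y hy => hji (hsep j hj i hi y hy x hxi)
    rw [D_empty, eulerSign_empty]
  | insert l A _ ih =>
    have finite_inter {D' : Set V} (h : D' ⊆ C) : FiniteDimensional ℝ (vectorSpan ℝ D') :=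
      Submodule.finiteDimensional_of_le (vectorSpan_mono ℝ h)
    have split_region (σ : SignType) :
        eulerSign (C ∩ signRegion l σ) = ∑ i ∈ I, eulerSign (D i ∩ signRegion l σ) := by
      have := finite_inter (Set.inter_subset_left (t := signRegion l σ))
      refine ih (hC.inter_signRegion l σ) (fun i hi => (hD i hi).inter_signRegion l σ)
        (fun i hi => Set.inter_subset_inter_left _ (hsubset i hi)) ?_ ?_
      · rintro x ⟨hx, hσ⟩
        obtain ⟨i, hi, hxi⟩ := hcover x hx
        exact ⟨i, hi, hxi, hσ⟩
      · rintro i hi j hj x ⟨hx, hxσ⟩ y ⟨hy, hyσ⟩ hA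
        refine hsep i hi j hj x hx y hy fun m hm => ?_
        obtain rfl | hm := Finset.mem_insert.1 hm
        · exact Eq.trans hxσ (Eq.symm hyσ)
        · exact hA m hm
    rw [hC.eulerSign_eq_sum_signRegion l, Finset.sum_congr rfl fun σ _ => split_region σ,
      Finset.sum_comm]
    refine Finset.sum_congr rfl fun i hi => ?_
    have := finite_inter (hsubset i hi)
    exact ((hD i hi).eulerSign_eq_sum_signRegion l).symm

end RelativelyOpen

section Faces

open Topology Module

variable {V : Type*} [AddCommGroup V] [Module ℝ V] {P F G K : Set V} {l m : V →ₗ[ℝ] ℝ} {c d : ℝ}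

theorem IsPolytope.convex (hP : IsPolytope P) : Convex ℝ P := by
  obtain ⟨S, rfl⟩ := hP
  exact convex_convexHull ℝ _

theorem vectorSpan_convexHull (S : Set V) : vectorSpan ℝ (convexHull ℝ S) = vectorSpan ℝ S := by
  rw [← direction_affineSpan, affineSpan_convexHull, direction_affineSpan]

theorem IsPolytope.finiteDimensional_vectorSpan (hP : IsPolytope P) :
    FiniteDimensional ℝ (vectorSpan ℝ P) := by
  obtain ⟨S, rfl⟩ := hP
  rw [vectorSpan_convexHull]
  exact finiteDimensional_vectorSpan_of_finite ℝ S.finite_toSet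

/-- The hyperplane `l = c` supports `P` in `F`: the half-space `l ≤ c` contains `P`, and `F` is the
intersection of `P` with the hyperplane. -/
structure IsSupporting (l : V →ₗ[ℝ] ℝ) (c : ℝ) (P F : Set V) : Prop where
  le : ∀ x ∈ P, l x ≤ c
  mem_iff : ∀ x, x ∈ F ↔ x ∈ P ∧ l x = c

theorem isFace_self (P : Set V) : IsFace P P := Or.inl rfl

theorem isFace_empty (P : Set V) : IsFace P ∅ := Or.inr (Or.inl rfl)

theorem IsSupporting.isFace (h : IsSupporting l c P F) : IsFace P F := by
  obtain rfl | ⟨x, hx⟩ := F.eq_empty_or_nonempty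
  · exact isFace_empty P
  obtain ⟨hxP, hlx⟩ := (h.mem_iff x).1 hx
  refine Or.inr (Or.inr ⟨l, Set.ext fun y => (h.mem_iff y).trans ?_⟩)
  refine and_congr_right fun hy => ⟨fun hly w hw => hly ▸ h.le w hw, fun hly => ?_⟩
  exact (h.le y hy).antisymm (hlx ▸ hly x hxP)

theorem IsFace.exists_isSupporting (hF : IsFace P F) (hne : F.Nonempty) :
    ∃ l c, IsSupporting l c P F := by
  obtain rfl | rfl | ⟨l, rfl⟩ := hF
  · exact ⟨0, 0, fun _ _ => le_rfl, by simp⟩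
  · exact absurd rfl hne.ne_empty
  · obtain ⟨x, hx, hmax⟩ := hne
    refine ⟨l, l x, hmax, fun y => and_congr_right fun hy => ⟨fun hly => ?_, fun hly => ?_⟩⟩
    · exact (hmax y hy).antisymm (hly x hx)
    · rwa [hly]

theorem IsFace.subset (hF : IsFace P F) : F ⊆ P := by
  intro x hx
  obtain ⟨l, c, h⟩ := hF.exists_isSupporting ⟨x, hx⟩
  exact ((h.mem_iff x).1 hx).1

theorem IsFace.of_subset (hF : IsFace P F) (hGP : G ⊆ P) (hFG : F ⊆ G) : IsFace G F := by
  obtain rfl | hne := F.eq_empty_or_nonempty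
  · exact isFace_empty G
  obtain ⟨l, c, h⟩ := hF.exists_isSupporting hne
  refine IsSupporting.isFace (l := l) (c := c) ⟨fun x hx => h.le x (hGP hx), fun x => ?_⟩
  exact ⟨fun hx => ⟨hFG hx, ((h.mem_iff x).1 hx).2⟩, fun hx => (h.mem_iff x).2 ⟨hGP hx.1, hx.2⟩⟩

theorem IsFace.isExtreme (hF : IsFace P F) : IsExtreme ℝ P F where
  subset := hF.subset
  left_mem_of_mem_openSegment := by
    rintro x hx y hy z hz ⟨a, b, ha, hb, hab, rfl⟩
    obtain ⟨l, c, h⟩ := hF.exists_isSupporting ⟨_, hz⟩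
    have map_eq := ((h.mem_iff _).1 hz).2
    rw [map_add, map_smul, map_smul, smul_eq_mul, smul_eq_mul] at map_eq
    refine (h.mem_iff x).2 ⟨hx, (h.le x hx).antisymm ?_⟩
    have := h.le y hy
    obtain rfl : b = 1 - a := by linarith
    nlinarith

theorem IsSupporting.eq_convexHull_filter {S : Finset V}
    (h : IsSupporting l c (convexHull ℝ (S : Set V)) F) :
    F = convexHull ℝ (S.filter (l · = c) : Set V) := by
  have le_of_mem (s : V) (hs : s ∈ S) : l s ≤ c := h.le s (subset_convexHull ℝ _ hs)
  refine Set.Subset.antisymm (fun x hx => ?_) fun x hx => (h.mem_iff x).2 ⟨?_, ?_⟩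
  · obtain ⟨hxS, hlx⟩ := (h.mem_iff x).1 hx
    obtain ⟨w, hw, hw1, rfl⟩ := Finset.mem_convexHull'.1 hxS
    have sum_slack : ∑ s ∈ S, w s * (c - l s) = 0 := by
      simp only [map_sum, map_smul, smul_eq_mul] at hlx
      simp only [mul_sub, Finset.sum_sub_distrib, ← Finset.sum_mul, hw1, hlx, one_mul, sub_self]
    have eq_of_weight_ne_zero (s : V) (hs : s ∈ S) (hws : w s ≠ 0) : l s = c := by
      have := (Finset.sum_eq_zero_iff_of_nonneg fun s hs =>
        mul_nonneg (hw s hs) (sub_nonneg.2 (le_of_mem s hs))).1 sum_slack s hs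
      exact (sub_eq_zero.1 ((mul_eq_zero.1 this).resolve_left hws)).symm
    refine Finset.mem_convexHull'.2 ⟨w, fun s hs => hw s (Finset.mem_filter.1 hs).1, ?_, ?_⟩
    · rw [Finset.sum_filter_of_ne eq_of_weight_ne_zero, hw1]
    · exact Finset.sum_filter_of_ne fun s hs hws =>
        eq_of_weight_ne_zero s hs (left_ne_zero_of_smul hws)
  · exact convexHull_mono (by exact_mod_cast Finset.filter_subset _ S) hx
  · exact convexHull_min (fun s hs => (Finset.mem_filter.1 hs).2)
      (convex_hyperplane l.isLinear c) hx

theorem IsFace.exists_eq_convexHull {S : Finset V} (hF : IsFace (convexHull ℝ (S : Set V)) F) :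
    ∃ T ⊆ S, F = convexHull ℝ (T : Set V) := by
  obtain rfl | hne := F.eq_empty_or_nonempty
  · exact ⟨∅, Finset.empty_subset S, by simp⟩
  · obtain ⟨l, c, h⟩ := hF.exists_isSupporting hne
    exact ⟨_, Finset.filter_subset _ _, h.eq_convexHull_filter⟩

theorem IsPolytope.of_isFace (hP : IsPolytope P) (hF : IsFace P F) : IsPolytope F := by
  obtain ⟨S, rfl⟩ := hP
  obtain ⟨T, -, hT⟩ := hF.exists_eq_convexHull
  exact ⟨T, hT⟩

theorem IsPolytope.finite_faces (hP : IsPolytope P) : {F | IsFace P F}.Finite := by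
  obtain ⟨S, rfl⟩ := hP
  refine (S.powerset.finite_toSet.image fun T : Finset V => convexHull ℝ (T : Set V)).subset ?_
  intro F hF
  obtain ⟨T, hT, rfl⟩ := IsFace.exists_eq_convexHull hF
  exact ⟨T, Finset.mem_coe.2 (Finset.mem_powerset.2 hT), rfl⟩

theorem isSupporting_convexHull {S : Finset V} (hle : ∀ s ∈ S, l s ≤ c)
    (hmem : ∀ s ∈ S, l s = c → s ∈ F) (hF : Convex ℝ F)
    (hsubset : F ⊆ convexHull ℝ (S : Set V)) (heq : ∀ x ∈ F, l x = c) :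
    IsSupporting l c (convexHull ℝ (S : Set V)) F := by
  have le_of_mem : ∀ x ∈ convexHull ℝ (S : Set V), l x ≤ c := fun x hx =>
    convexHull_min (t := {x | l x ≤ c}) hle (convex_halfSpace_le l.isLinear c) hx
  refine ⟨le_of_mem, fun x => ⟨fun hx => ⟨hsubset hx, heq x hx⟩, fun hx => ?_⟩⟩
  have : IsSupporting l c (convexHull ℝ (S : Set V)) {x | x ∈ convexHull ℝ (S : Set V) ∧ l x = c} :=
    ⟨le_of_mem, fun _ => Iff.rfl⟩
  have hx' : x ∈ convexHull ℝ (S.filter (l · = c) : Set V) := this.eq_convexHull_filter ▸ hx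
  refine convexHull_min (fun s hs => ?_) hF hx'
  exact hmem s (Finset.mem_filter.1 hs).1 (Finset.mem_filter.1 hs).2

/-- Tilting a hyperplane supporting `P` in `F` slightly towards one supporting `F` in `K` cuts `P`
exactly in `K`. -/
theorem IsSupporting.eventually_add_smul (hP : IsPolytope P) (hF : IsSupporting l c P F)
    (hK : IsSupporting m d F K) :
    ∀ᶠ ε in 𝓝[>] (0 : ℝ), IsSupporting (l + ε • m) (c + ε * d) P K := by
  have convex_K : Convex ℝ K := ((hP.of_isFace hF.isFace).of_isFace hK.isFace).convex
  obtain ⟨S, rfl⟩ := hP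
  have eventually_vertex (s : V) (hs : s ∈ S) : ∀ᶠ ε in 𝓝[>] (0 : ℝ),
      l s + ε * m s ≤ c + ε * d ∧ (l s + ε * m s = c + ε * d → s ∈ K) := by
    have hsS := subset_convexHull ℝ _ hs
    obtain hlt | heq := (hF.le s hsS).lt_or_eq
    · have tendsto_slack : Filter.Tendsto (fun ε : ℝ => (c + ε * d) - (l s + ε * m s)) (𝓝 0)
          (𝓝 (c - l s)) := by
        have : Continuous fun ε : ℝ => (c + ε * d) - (l s + ε * m s) := by fun_prop
        simpa using this.tendsto 0
      filter_upwards [(tendsto_slack.eventually (lt_mem_nhds (sub_pos.2 hlt))).filter_mono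
        nhdsWithin_le_nhds] with ε hε
      exact ⟨(sub_pos.1 hε).le, fun h => absurd h (sub_pos.1 hε).ne⟩
    · have hsF : s ∈ F := (hF.mem_iff s).2 ⟨hsS, heq⟩
      filter_upwards [self_mem_nhdsWithin] with ε (hε : 0 < ε)
      rw [heq]
      refine ⟨by gcongr; exact hK.le s hsF, fun h => (hK.mem_iff s).2 ⟨hsF, ?_⟩⟩
      exact mul_left_cancel₀ hε.ne' (add_left_cancel h)
  filter_upwards [S.eventually_all.2 eventually_vertex] with ε hε
  refine isSupporting_convexHull (fun s hs => (hε s hs).1) (fun s hs => (hε s hs).2) convex_K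
    (hK.isFace.subset.trans hF.isFace.subset) fun x hx => ?_
  obtain ⟨hxF, hmx⟩ := (hK.mem_iff x).1 hx
  simp [((hF.mem_iff x).1 hxF).2, hmx]

theorem IsFace.trans (hP : IsPolytope P) (hF : IsFace P F) (hK : IsFace F K) : IsFace P K := by
  obtain rfl | hne := K.eq_empty_or_nonempty
  · exact isFace_empty P
  obtain ⟨l, c, hl⟩ := hF.exists_isSupporting (hne.mono hK.subset)
  obtain ⟨m, d, hm⟩ := hK.exists_isSupporting hne
  obtain ⟨ε, hε⟩ := (hl.eventually_add_smul hP hm).exists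
  exact hε.isFace

theorem IsFace.finrank_vectorSpan_lt (hF : IsFace P F) [FiniteDimensional ℝ (vectorSpan ℝ P)]
    (hne : F.Nonempty) (hFP : F ≠ P) :
    finrank ℝ (vectorSpan ℝ F) < finrank ℝ (vectorSpan ℝ P) := by
  obtain ⟨l, c, h⟩ := hF.exists_isSupporting hne
  obtain ⟨x, hx⟩ := hne
  obtain ⟨y, hy, hyF⟩ := Set.exists_of_ssubset (hF.subset.ssubset_of_ne hFP)
  have vectorSpan_le : vectorSpan ℝ F ≤ vectorSpan ℝ P ⊓ LinearMap.ker l := by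
    refine le_inf (vectorSpan_mono ℝ hF.subset) (Submodule.span_le.2 ?_)
    rintro _ ⟨a, ha, b, hb, rfl⟩
    simp [((h.mem_iff a).1 ha).2, ((h.mem_iff b).1 hb).2]
  have map_ne_zero : l (y - x) ≠ 0 := by
    rw [map_sub, ((h.mem_iff x).1 hx).2, sub_ne_zero]
    exact fun hly => hyF ((h.mem_iff y).2 ⟨hy, hly⟩)
  have : FiniteDimensional ℝ (vectorSpan ℝ P ⊓ LinearMap.ker l : Submodule ℝ V) :=
    Submodule.finiteDimensional_of_le inf_le_left
  have := Submodule.finrank_mono vectorSpan_le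
  have := finrank_inf_ker_add_one (vsub_mem_vectorSpan ℝ hy (hF.subset hx)) map_ne_zero
  lia

end Faces

section RelativeInterior

open Topology Module Pointwise

variable {V : Type*} [AddCommGroup V] [Module ℝ V] {G H K : Set V} {p x y z v : V}

/-- The relative interior of `G`, in the algebraic sense: the points of `G` that can be moved a
little in every direction of the affine span of `G`. -/
def relint (G : Set V) : Set V :=
  {x | x ∈ G ∧ ∀ v ∈ vectorSpan ℝ G, ∀ᶠ ε in 𝓝 (0 : ℝ), x + ε • v ∈ G}

theorem IsPolytope.nonempty_relint (hG : IsPolytope G) (hne : G.Nonempty) :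
    (relint G).Nonempty := by
  obtain ⟨S, rfl⟩ := hG
  have hS : S.Nonempty := by exact_mod_cast convexHull_nonempty_iff.1 hne
  have card_pos : (0 : ℝ) < S.card := by exact_mod_cast hS.card_pos
  have centroid_mem : ∑ s ∈ S, (S.card : ℝ)⁻¹ • s ∈ convexHull ℝ (S : Set V) :=
    Finset.mem_convexHull'.2 ⟨fun _ => (S.card : ℝ)⁻¹, fun _ _ => by positivity, by
      rw [Finset.sum_const, nsmul_eq_mul, mul_inv_cancel₀ card_pos.ne'], rfl⟩
  refine ⟨_, centroid_mem, fun v hv => ?_⟩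
  rw [vectorSpan_convexHull] at hv
  refine eventually_add_smul_mem_of_mem_span (convex_convexHull ℝ _) centroid_mem ?_ hv
  rintro _ ⟨s, hs, t, ht, rfl⟩
  filter_upwards [Metric.closedBall_mem_nhds (0 : ℝ) (inv_pos.2 card_pos)] with ε hε
  rw [mem_closedBall_zero_iff, Real.norm_eq_abs, abs_le] at hε
  refine Finset.mem_convexHull'.2 ⟨fun r => (S.card : ℝ)⁻¹ + (if r = s then ε else 0) -
    (if r = t then ε else 0), fun r _ => ?_, ?_, ?_⟩
  · grind
  · simp [Finset.sum_add_distrib, Finset.mem_coe.1 hs, Finset.mem_coe.1 ht, card_pos.ne']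
  · simp only [add_smul, sub_smul, ite_smul, zero_smul, Finset.sum_sub_distrib,
      Finset.sum_add_distrib, Finset.sum_ite_eq', Finset.mem_coe.1 hs, Finset.mem_coe.1 ht, if_true]
    rw [vsub_eq_sub, smul_sub, add_sub_assoc]

theorem smul_add_smul_mem_relint (hG : Convex ℝ G) (hx : x ∈ G) (hy : y ∈ relint G) {a b : ℝ}
    (ha : 0 ≤ a) (hb : 0 < b) (hab : a + b = 1) : a • x + b • y ∈ relint G := by
  refine ⟨hG hx hy.1 ha hb.le hab, fun v hv => ?_⟩
  filter_upwards [(tendsto_const_mul_nhds_zero b⁻¹).eventually (hy.2 v hv)] with ε hε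
  convert hG hx hε ha hb.le hab using 1
  match_scalars <;> field_simp

theorem IsFace.subset_of_mem_relint (hK : IsFace G K) (hHG : H ⊆ G) (hp : p ∈ relint H)
    (hpK : p ∈ K) : H ⊆ K := by
  intro y hy
  obtain ⟨l, c, h⟩ := hK.exists_isSupporting ⟨p, hpK⟩
  obtain ⟨-, hlp⟩ := (h.mem_iff p).1 hpK
  obtain ⟨ε, hmem, hε⟩ := exists_sign_eq_of_eventually_nhds_zero
    (hp.2 _ (vsub_mem_vectorSpan ℝ hy hp.1)) (-1)
  have hε : ε < 0 := sign_eq_neg_one_iff.1 hε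
  have map_le := h.le _ (hHG hmem)
  rw [map_add, map_smul, vsub_eq_sub, map_sub, hlp, smul_eq_mul] at map_le
  refine (h.mem_iff y).2 ⟨hHG hy, (h.le y (hHG hy)).antisymm ?_⟩
  nlinarith

theorem exists_dual_nonneg_of_neg_notMem {E : Type*} [AddCommGroup E] [Module ℝ E]
    {T : PointedCone ℝ E} {u : E} (hu : -u ∉ T) (hT : ∀ y, ∃ c : ℝ, c • u + y ∈ T) :
    ∃ g : E →ₗ[ℝ] ℝ, g u = 1 ∧ ∀ x ∈ T, 0 ≤ g x := by
  have hu0 : u ≠ 0 := by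
    rintro rfl
    exact hu (by simp)
  let f : E →ₗ.[ℝ] ℝ := LinearPMap.mkSpanSingleton u (1 : ℝ) hu0
  have f_smul (c : ℝ) (hc : c • u ∈ f.domain) : f ⟨c • u, hc⟩ = c :=
    (LinearPMap.mkSpanSingleton'_apply u (1 : ℝ) _ c hc).trans (mul_one c)
  have f_nonneg (x : f.domain) (hx : (x : E) ∈ T) : 0 ≤ f x := by
    obtain ⟨x, hxf⟩ := x
    obtain ⟨c, rfl⟩ := Submodule.mem_span_singleton.1 hxf
    rw [f_smul]
    by_contra! hc
    have := T.smul_mem (inv_nonneg.2 (neg_nonneg.2 hc.le)) hx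
    refine hu ?_
    rwa [smul_smul, inv_neg, neg_mul, inv_mul_cancel₀ hc.ne, neg_one_smul] at this
  obtain ⟨g, hgf, hg⟩ := riesz_extension T f f_nonneg fun y => by
    obtain ⟨c, hc⟩ := hT y
    exact ⟨⟨c • u, Submodule.mem_span_singleton.2 ⟨c, rfl⟩⟩, hc⟩
  refine ⟨g, ?_, hg⟩
  have hu_mem : (1 : ℝ) • u ∈ f.domain := Submodule.mem_span_singleton.2 ⟨1, rfl⟩
  rw [← one_smul ℝ u, hgf ⟨_, hu_mem⟩, f_smul]

/-- The functional separates `z - p` from the cone of directions pointing from `p` into `G`, taken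
in the direction space of `G`, where `z - p` is an order unit. -/
theorem exists_lt_of_notMem_relint (hG : Convex ℝ G) (hz : z ∈ relint G) (hp : p ∈ G)
    (hp' : p ∉ relint G) : ∃ l : V →ₗ[ℝ] ℝ, (∀ y ∈ G, l y ≤ l p) ∧ l z < l p := by
  let L := vectorSpan ℝ G
  let D : Set L := {v | p + v ∈ G}
  have convex_D : Convex ℝ D := (hG.translate_preimage_right p).linear_preimage L.subtype
  have pointed : (ConvexCone.hull ℝ D).Pointed :=
    ConvexCone.subset_hull (show (0 : L) ∈ D by simpa [D] using hp)
  let T : PointedCone ℝ L := (ConvexCone.hull ℝ D).toPointedCone pointed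
  have mem_T {v : L} : v ∈ T ↔ ∃ r : ℝ, 0 < r ∧ v ∈ r • D := ConvexCone.mem_hull_of_convex convex_D
  let u : L := ⟨z - p, vsub_mem_vectorSpan ℝ hz.1 hp⟩
  have neg_u_notMem : -u ∉ T := by
    rw [mem_T]
    rintro ⟨r, hr, w, hw, hwu⟩
    refine hp' ?_
    convert smul_add_smul_mem_relint hG hw hz (a := r / (r + 1)) (b := 1 / (r + 1)) (by positivity)
      (by positivity) (by field_simp) using 1
    have hwu : r • (w : V) = -(z - p) := congrArg Subtype.val hwu
    have hz_eq : z = p - r • (w : V) := by rw [hwu]; module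
    rw [hz_eq]
    match_scalars <;> field_simp
    ring
  have u_orderUnit (y : L) : ∃ c : ℝ, c • u + y ∈ T := by
    obtain ⟨ε, hmem, hε⟩ := exists_sign_eq_of_eventually_nhds_zero (hz.2 y y.2) 1
    have hε : 0 < ε := sign_eq_one_iff.1 hε
    refine ⟨ε⁻¹, mem_T.2 ⟨ε⁻¹, inv_pos.2 hε, u + ε • y, ?_, ?_⟩⟩
    · simpa [D, u, ← add_assoc] using hmem
    · simp [smul_smul, hε.ne']
  obtain ⟨g, hgu, hg⟩ := exists_dual_nonneg_of_neg_notMem neg_u_notMem u_orderUnit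
  obtain ⟨l, rfl⟩ := LinearMap.exists_extend g
  refine ⟨-l, fun y hy => ?_, ?_⟩
  · have := hg ⟨y - p, vsub_mem_vectorSpan ℝ hy hp⟩
      (ConvexCone.subset_hull (show p + (y - p) ∈ G by simpa using hy))
    simpa using this
  · have hlu : l (z - p) = 1 := hgu
    rw [map_sub] at hlu
    simp only [LinearMap.neg_apply]
    linarith

theorem IsPolytope.exists_isFace_mem_relint (hG : IsPolytope G) (hp : p ∈ G) :
    ∃ H, IsFace G H ∧ p ∈ relint H := by
  induction hn : finrank ℝ (vectorSpan ℝ G) using Nat.strong_induction_on generalizing G with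
  | _ n ih =>
  by_cases hpG : p ∈ relint G
  · exact ⟨G, isFace_self G, hpG⟩
  obtain ⟨z, hz⟩ := hG.nonempty_relint ⟨p, hp⟩
  obtain ⟨l, hle, hlt⟩ := exists_lt_of_notMem_relint hG.convex hz hp hpG
  have hF : IsFace G {x | x ∈ G ∧ l x = l p} :=
    IsSupporting.isFace (l := l) ⟨hle, fun _ => Iff.rfl⟩
  have hFG : {x | x ∈ G ∧ l x = l p} ≠ G := fun h => hlt.ne (h.symm.subset hz.1).2
  have := hG.finiteDimensional_vectorSpan
  obtain ⟨H, hH, hpH⟩ := ih _ (hn ▸ hF.finrank_vectorSpan_lt ⟨p, hp, rfl⟩ hFG) (hG.of_isFace hF)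
    ⟨hp, rfl⟩ rfl
  exact ⟨H, hF.trans hG hH, hpH⟩

end RelativeInterior

section FaceFunctionals

variable {V : Type*} [AddCommGroup V] [Module ℝ V] {G K : Set V} {x z v : V}
  {m : Set V → V →ₗ[ℝ] ℝ}

theorem t2Space_moduleTopology : @T2Space V (moduleTopology ℝ V) := by
  let _ : TopologicalSpace V := moduleTopology ℝ V
  have : IsModuleTopology ℝ V := ⟨rfl⟩
  have eval_injective : Function.Injective fun (x : V) (f : Module.Dual ℝ V) => f x :=
    fun x y hxy => sub_eq_zero.1 <| (Module.forall_dual_apply_eq_zero_iff ℝ _).1 fun f => by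
      rw [map_sub, sub_eq_zero]
      exact congrFun hxy f
  exact T2Space.of_injective_continuous eval_injective
    (continuous_pi fun f => IsModuleTopology.continuous_of_linearMap f)

theorem IsPolytope.isClosed_setOf_add_smul_mem (hG : IsPolytope G) (z v : V) :
    IsClosed {t : ℝ | z + t • v ∈ G} := by
  let _ : TopologicalSpace V := moduleTopology ℝ V
  have : IsModuleTopology ℝ V := ⟨rfl⟩
  have : T2Space V := t2Space_moduleTopology
  have : IsTopologicalAddGroup V := IsModuleTopology.topologicalAddGroup ℝ V
  obtain ⟨S, rfl⟩ := hG
  have hline : Continuous fun t : ℝ => z + t • v := by fun_prop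
  exact (S.finite_toSet.isClosed_convexHull ℝ).preimage hline

theorem IsPolytope.exists_forall_apply_le (hG : IsPolytope G) (f : V →ₗ[ℝ] ℝ) :
    ∃ M, ∀ x ∈ G, f x ≤ M := by
  obtain ⟨S, rfl⟩ := hG
  obtain ⟨M, hM⟩ := Finset.exists_le (S.image f)
  exact ⟨M, convexHull_min (fun s hs => hM _ (Finset.mem_image_of_mem _ hs))
    (convex_halfSpace_le f.isLinear M)⟩

theorem IsPolytope.eq_zero_of_forall_add_smul_mem (hG : IsPolytope G)
    (h : ∀ t : ℝ, 0 ≤ t → z + t • v ∈ G) : v = 0 := by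
  have apply_nonpos (f : V →ₗ[ℝ] ℝ) : f v ≤ 0 := by
    obtain ⟨M, hM⟩ := hG.exists_forall_apply_le f
    by_contra! hfv
    have hle := hM _ (h ((|M - f z| + 1) / f v) (by positivity))
    rw [map_add, map_smul, smul_eq_mul, div_mul_cancel₀ _ hfv.ne'] at hle
    linarith [le_abs_self (M - f z)]
  refine (Module.forall_dual_apply_eq_zero_iff ℝ v).1 fun f => (apply_nonpos f).antisymm ?_
  simpa using apply_nonpos (-f)

/-- A system of normalised supporting functionals for the proper faces `K` of `G`, as seen from a
point `z`: the hyperplane `m K (x - z) = 1` supports `G` in `K`. The choice `m ∅ = 0` makes the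
empty face obey the same rule. -/
structure IsFaceFunctionals (G : Set V) (z : V) (m : Set V → V →ₗ[ℝ] ℝ) : Prop where
  map_empty : m ∅ = 0
  isSupporting : ∀ ⦃K⦄, IsFace G K → K ≠ G → IsSupporting (m K) (m K z + 1) G K

theorem IsFace.exists_isSupporting_add_one (hK : IsFace G K) (hne : K.Nonempty) (hKG : K ≠ G)
    (hz : z ∈ relint G) : ∃ l : V →ₗ[ℝ] ℝ, IsSupporting l (l z + 1) G K := by
  obtain ⟨l, c, h⟩ := hK.exists_isSupporting hne
  have hzK : z ∉ K := fun hzK =>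
    hKG (hK.subset.antisymm (hK.subset_of_mem_relint subset_rfl hz hzK))
  have hlt : 0 < c - l z := sub_pos.2 <|
    (h.le z hz.1).lt_of_ne fun hlz => hzK ((h.mem_iff z).2 ⟨hz.1, hlz⟩)
  have offset_eq : ((c - l z)⁻¹ • l) z + 1 = (c - l z)⁻¹ * c := by
    simp only [LinearMap.smul_apply, smul_eq_mul]
    field_simp
    ring
  refine ⟨(c - l z)⁻¹ • l, fun x hx => ?_, fun x => ?_⟩ <;> rw [offset_eq]
  · exact mul_le_mul_of_nonneg_left (h.le x hx) (inv_pos.2 hlt).le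
  · rw [h.mem_iff, LinearMap.smul_apply, smul_eq_mul, mul_right_inj' (inv_pos.2 hlt).ne']

theorem exists_isFaceFunctionals (hz : z ∈ relint G) : ∃ m, IsFaceFunctionals G z m := by
  have hex (K : Set V) : ∃ l : V →ₗ[ℝ] ℝ, (K = ∅ → l = 0) ∧
      (IsFace G K → K ≠ G → IsSupporting l (l z + 1) G K) := by
    obtain rfl | hne := K.eq_empty_or_nonempty
    · exact ⟨0, fun _ => rfl, fun _ _ => ⟨by simp, by simp⟩⟩
    by_cases hK : IsFace G K ∧ K ≠ G
    · obtain ⟨l, hl⟩ := hK.1.exists_isSupporting_add_one hne hK.2 hz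
      exact ⟨l, fun h => absurd h hne.ne_empty, fun _ _ => hl⟩
    · exact ⟨0, fun _ => rfl, fun hF hne => absurd ⟨hF, hne⟩ hK⟩
  choose m hempty hsupp using hex
  exact ⟨m, hempty ∅ rfl, hsupp⟩

theorem IsFaceFunctionals.apply_sub_le_one (hm : IsFaceFunctionals G z m) (hK : IsFace G K)
    (hKG : K ≠ G) (hx : x ∈ G) : m K (x - z) ≤ 1 := by
  rw [map_sub, sub_le_iff_le_add']
  exact (hm.isSupporting hK hKG).le x hx

theorem IsFaceFunctionals.apply_sub_eq_one_iff (hm : IsFaceFunctionals G z m) (hK : IsFace G K)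
    (hKG : K ≠ G) (hx : x ∈ G) : m K (x - z) = 1 ↔ x ∈ K := by
  rw [map_sub, sub_eq_iff_eq_add', (hm.isSupporting hK hKG).mem_iff, and_iff_right hx]

/-- Walking from `z` towards `z + v`, a point where the segment leaves `G` would lie in the relative
interior of a proper face, whose functional exceeds `1` from there on. -/
theorem IsFaceFunctionals.add_mem (hm : IsFaceFunctionals G z m) (hG : IsPolytope G) (hz : z ∈ G)
    (hv : v ∈ vectorSpan ℝ G) (h : ∀ K, IsFace G K → K ≠ G → m K v ≤ 1) : z + v ∈ G := by
  suffices (1 : ℝ) ∈ {t : ℝ | z + t • v ∈ G} by simpa using this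
  have hclosed := hG.isClosed_setOf_add_smul_mem z v
  refine (hclosed.inter isClosed_Icc).mem_of_ge_of_forall_exists_gt (by simpa using hz)
    zero_le_one fun t ⟨(htG : z + t • v ∈ G), ht₀, ht₁⟩ => ?_
  have mem_relint : z + t • v ∈ relint G := by
    obtain ⟨H, hH, hq⟩ := hG.exists_isFace_mem_relint htG
    obtain rfl | hHG := eq_or_ne H G
    · exact hq
    have apply_eq_one := (hm.apply_sub_eq_one_iff hH hHG htG).2 hq.1
    rw [add_sub_cancel_left, map_smul, smul_eq_mul] at apply_eq_one
    nlinarith [h H hH hHG]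
  obtain ⟨ε, hεG, hε₀, hε₁⟩ := ((mem_relint.2 v hv).filter_mono nhdsWithin_le_nhds |>.and
    (Ioc_mem_nhdsGT (sub_pos.2 ht₁))).exists
  refine ⟨t + ε, ?_, by linarith, by linarith⟩
  simpa [add_smul, add_assoc] using hεG

end FaceFunctionals

section EulerRelation

open Topology Module

variable {V : Type*} [AddCommGroup V] [Module ℝ V] {F G H H' K₀ : Set V} {p v w x y z : V}
  {m : Set V → V →ₗ[ℝ] ℝ} {a μ : ℝ}

/-- The faces `K` of `G` with `F ≤ K < G`. -/
def faceIco (F G : Set V) : Set (Set V) := {K | IsFace G K ∧ F ⊆ K ∧ K ≠ G}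

/-- The cell of the face `H` in the direction space of `G`: the vectors `v` for which `m K v`, among
the faces `F ≤ K < G`, is largest exactly at the faces containing `H`. For `F = ∅` and functionals
`m` normalised at `z`, this is the open cone over the relative interior of `H` seen from `z`. -/
def cell (m : Set V → V →ₗ[ℝ] ℝ) (F G H : Set V) : Set V :=
  {v | v ∈ vectorSpan ℝ G ∧ ∀ K ∈ faceIco F G, m K v ≤ m H v ∧ (m K v = m H v ↔ H ⊆ K)}

/-- The linear span of `H` with the origin moved to `z`. -/
def spanFrom (z : V) (H : Set V) : Submodule ℝ V := Submodule.span ℝ ((· - z) '' H)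

theorem finite_faceIco (hG : IsPolytope G) : (faceIco F G).Finite :=
  hG.finite_faces.subset fun _ hK => hK.1

theorem sub_mem_spanFrom (hx : x ∈ H) : x - z ∈ spanFrom z H :=
  Submodule.subset_span ⟨x, hx, rfl⟩

theorem isRelOpenConvex_submodule (W : Submodule ℝ V) : IsRelOpenConvex (W : Set V) where
  convex := W.convex
  eventually_mem _ hx _ hy :=
    .of_forall fun _ => W.add_mem hx (W.smul_mem _ (W.sub_mem hy hx))

theorem IsRelOpenConvex.inter_biInter_signRegion {C : Set V} (hC : IsRelOpenConvex C) {ι : Type*}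
    {I : Set ι} (hI : I.Finite) (l : ι → V →ₗ[ℝ] ℝ) (σ : ι → SignType) :
    IsRelOpenConvex (C ∩ ⋂ i ∈ I, signRegion (l i) (σ i)) := by
  induction I, hI using Set.Finite.induction_on with
  | empty => simpa using hC
  | insert _ _ ih =>
    rw [Set.biInter_insert, Set.inter_left_comm, Set.inter_comm]
    exact ih.inter_signRegion _ _

theorem cell_eq_inter_signRegion : cell m F G H = (vectorSpan ℝ G : Set V) ∩
    ⋂ K ∈ faceIco F G, signRegion (m H - m K) (if H ⊆ K then 0 else 1) := by
  ext v
  simp only [cell, Set.mem_ofPred_eq, Set.mem_inter_iff, SetLike.mem_coe, Set.mem_iInter,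
    signRegion]
  refine and_congr_right fun _ => forall₂_congr fun K _ => ?_
  split_ifs with hHK
  · rw [sign_eq_zero_iff, LinearMap.sub_apply]
    grind
  · rw [sign_eq_one_iff, LinearMap.sub_apply]
    grind

theorem isRelOpenConvex_cell (hG : IsPolytope G) : IsRelOpenConvex (cell m F G H) := by
  rw [cell_eq_inter_signRegion]
  exact (isRelOpenConvex_submodule _).inter_biInter_signRegion (finite_faceIco hG) _ _

theorem subset_of_mem_cell (hH : H ∈ faceIco F G) (hH' : H' ∈ faceIco F G)
    (hx : x ∈ cell m F G H) (hy : y ∈ cell m F G H')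
    (hsign : SignType.sign ((m H - m H') x) = SignType.sign ((m H - m H') y)) : H ⊆ H' := by
  obtain ⟨hle, heq⟩ := hx.2 H' hH'
  have hle' : m H y ≤ m H' y := (hy.2 H hH).1
  refine heq.1 (hle.antisymm ?_)
  by_contra! hlt
  rw [LinearMap.sub_apply, LinearMap.sub_apply, sign_pos (sub_pos.2 hlt), eq_comm,
    sign_eq_one_iff, sub_pos] at hsign
  exact hsign.not_ge hle'

theorem eq_of_mem_cell (hH : H ∈ faceIco F G) (hH' : H' ∈ faceIco F G) (hx : x ∈ cell m F G H)
    (hy : y ∈ cell m F G H') (hsign : ∀ K ∈ faceIco F G, ∀ K' ∈ faceIco F G,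
      SignType.sign ((m K - m K') x) = SignType.sign ((m K - m K') y)) : H = H' :=
  (subset_of_mem_cell hH hH' hx hy (hsign H hH H' hH')).antisymm
    (subset_of_mem_cell hH' hH hy hx (hsign H' hH' H hH).symm)

theorem IsFaceFunctionals.mem_cell_of_mem_relint (hm : IsFaceFunctionals G z m)
    (hH : IsFace G H) (hFH : F ⊆ H) (hx : x ∈ relint H) (ha : 0 < a) (hv : v ∈ vectorSpan ℝ G)
    (happly : ∀ K ∈ faceIco F G, m K (x - z) = 1 + a * (m K v - μ)) (hK₀ : K₀ ∈ faceIco F G)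
    (hμ : m K₀ v = μ) : H ∈ faceIco F G ∧ v ∈ cell m F G H := by
  have hxG : x ∈ G := hH.subset hx.1
  have apply_eq_iff (K) (hK : K ∈ faceIco F G) : m K v = μ ↔ H ⊆ K := by
    have mem_iff : x ∈ K ↔ H ⊆ K :=
      ⟨hK.1.subset_of_mem_relint hH.subset hx, fun hHK => hHK hx.1⟩
    rw [← mem_iff, ← hm.apply_sub_eq_one_iff hK.1 hK.2.2 hxG, happly K hK, add_eq_left,
      mul_eq_zero, or_iff_right ha.ne', sub_eq_zero]
  have hHG : H ≠ G := by
    rintro rfl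
    exact hK₀.2.2 (hK₀.1.subset.antisymm ((apply_eq_iff K₀ hK₀).1 hμ))
  have hHI : H ∈ faceIco F G := ⟨hH, hFH, hHG⟩
  refine ⟨hHI, hv, fun K hK => ?_⟩
  rw [(apply_eq_iff H hHI).2 subset_rfl]
  refine ⟨?_, apply_eq_iff K hK⟩
  have hle := hm.apply_sub_le_one hK.1 hK.2.2 hxG
  rw [happly K hK] at hle
  nlinarith

theorem IsFaceFunctionals.eventually_add_smul_mem (hm : IsFaceFunctionals G z m)
    (hG : IsPolytope G) (hz : z ∈ G) (hp : p ∈ G) (hw : w ∈ vectorSpan ℝ G)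
    (h : ∀ K, IsFace G K → K ≠ G → p ∈ K → m K w ≤ 0) : ∀ᶠ ε in 𝓝[>] (0 : ℝ), p + ε • w ∈ G := by
  have eventually_le_one : ∀ᶠ ε in 𝓝[>] (0 : ℝ), ∀ K ∈ {K | IsFace G K}, K ≠ G →
      m K (p - z + ε • w) ≤ 1 := by
    refine (Filter.eventually_all_finite hG.finite_faces).2 fun K hK => ?_
    refine Filter.eventually_imp_distrib_left.2 fun hKG => ?_
    simp only [map_add, map_smul, smul_eq_mul]
    by_cases hpK : p ∈ K
    · filter_upwards [self_mem_nhdsWithin] with ε (hε : 0 < ε)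
      nlinarith [h K hK hKG hpK, hm.apply_sub_le_one hK hKG hp]
    · have hlt : m K (p - z) < 1 := (hm.apply_sub_le_one hK hKG hp).lt_of_ne fun h =>
        hpK ((hm.apply_sub_eq_one_iff hK hKG hp).1 h)
      have hcont : Continuous fun ε : ℝ => m K (p - z) + ε * m K w := by fun_prop
      refine Filter.Eventually.filter_mono nhdsWithin_le_nhds ?_
      refine (hcont.tendsto 0).eventually_le_const ?_
      simpa using hlt
  filter_upwards [eventually_le_one] with ε hε
  have hmem := hm.add_mem hG hz
    (Submodule.add_mem _ (vsub_mem_vectorSpan ℝ hp hz) (Submodule.smul_mem _ ε hw)) hε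
  rwa [vsub_eq_sub, ← add_assoc, add_sub_cancel] at hmem

theorem IsPolytope.exists_isFace_add_smul_mem_relint (hG : IsPolytope G) (hp : p ∈ G)
    (hw : ∀ᶠ ε in 𝓝[>] (0 : ℝ), p + ε • w ∈ G) :
    ∃ ε : ℝ, 0 < ε ∧ ∃ H, IsFace G H ∧ p ∈ H ∧ p + ε • w ∈ relint H := by
  obtain ⟨ε, hεG, hε : 0 < ε⟩ := (hw.and self_mem_nhdsWithin).exists
  have midpoint_mem : p + (ε / 2) • w ∈ openSegment ℝ p (p + ε • w) :=
    ⟨1 / 2, 1 / 2, by norm_num, by norm_num, by norm_num, by module⟩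
  obtain ⟨H, hH, hxH⟩ := hG.exists_isFace_mem_relint
    (hG.convex.openSegment_subset hp hεG midpoint_mem)
  exact ⟨ε / 2, half_pos hε, H, hH, hH.isExtreme.2 hp hεG hxH.1 midpoint_mem, hxH⟩

theorem exists_forall_apply_le_of_faceIco (hG : IsPolytope G) (hF : IsFace G F) (hFG : F ≠ G)
    (v : V) : ∃ K₀ ∈ faceIco F G, ∀ K ∈ faceIco F G, m K v ≤ m K₀ v :=
  Set.exists_max_image _ (fun K => m K v) (finite_faceIco hG) ⟨F, hF, subset_rfl, hFG⟩

theorem zero_mem_cell_empty : 0 ∈ cell m F G ∅ :=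
  ⟨Submodule.zero_mem _, fun _ _ => by simp⟩

theorem IsFaceFunctionals.exists_mem_cell_of_empty (hm : IsFaceFunctionals G z m)
    (hG : IsPolytope G) (hz : z ∈ G) (hv : v ∈ vectorSpan ℝ G) :
    ∃ H ∈ faceIco ∅ G, v ∈ cell m ∅ G H ∧ v ∈ spanFrom z H := by
  have hempty : ∅ ∈ faceIco ∅ G :=
    ⟨isFace_empty G, subset_rfl, (Set.nonempty_of_mem hz).ne_empty.symm⟩
  obtain ⟨K₀, hK₀, hmax⟩ := exists_forall_apply_le_of_faceIco (m := m) hG hempty.1 hempty.2.2 v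
  have hle (K) (hK : IsFace G K) (hKG : K ≠ G) := hmax K ⟨hK, Set.empty_subset K, hKG⟩
  have hμ_nonneg : 0 ≤ m K₀ v := by simpa [hm.map_empty] using hmax ∅ hempty
  obtain hμ | hμ := hμ_nonneg.eq_or_lt
  · obtain rfl : v = 0 := hG.eq_zero_of_forall_add_smul_mem (z := z) fun t ht =>
      hm.add_mem hG hz (Submodule.smul_mem _ t hv) fun K hK hKG => by
        rw [map_smul, smul_eq_mul]
        nlinarith [hle K hK hKG]
    exact ⟨∅, hempty, zero_mem_cell_empty, Submodule.zero_mem _⟩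
  · have hxG : z + (m K₀ v)⁻¹ • v ∈ G :=
      hm.add_mem hG hz (Submodule.smul_mem _ _ hv) fun K hK hKG => by
        rw [map_smul, smul_eq_mul, inv_mul_le_iff₀ hμ, mul_one]
        exact hle K hK hKG
    obtain ⟨H, hH, hxH⟩ := hG.exists_isFace_mem_relint hxG
    obtain ⟨hHI, hvH⟩ := hm.mem_cell_of_mem_relint hH (Set.empty_subset H) hxH (inv_pos.2 hμ) hv
      (fun K _ => by rw [add_sub_cancel_left, map_smul, smul_eq_mul]; field_simp; ring) hK₀ rfl
    refine ⟨H, hHI, hvH, ?_⟩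
    have hspan := Submodule.smul_mem _ (m K₀ v) (sub_mem_spanFrom (z := z) hxH.1)
    rwa [add_sub_cancel_left, smul_inv_smul₀ hμ.ne'] at hspan

/-- The face is found by moving slightly from a point `p` in the relative interior of `F` in the
direction obtained from `v` by subtracting the multiple of `p - z` that makes its largest
functional value `0`. -/
theorem IsFaceFunctionals.exists_mem_cell_of_nonempty (hm : IsFaceFunctionals G z m)
    (hG : IsPolytope G) (hz : z ∈ G) (hF : IsFace G F) (hne : F.Nonempty) (hFG : F ≠ G)
    (hv : v ∈ vectorSpan ℝ G) : ∃ H ∈ faceIco F G, v ∈ cell m F G H ∧ v ∈ spanFrom z H := by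
  obtain ⟨K₀, hK₀, hmax⟩ := exists_forall_apply_le_of_faceIco (m := m) hG hF hFG v
  set μ := m K₀ v with hμ
  obtain ⟨p, hp⟩ := (hG.of_isFace hF).nonempty_relint hne
  have hpG : p ∈ G := hF.subset hp.1
  have apply_p (K) (hK : K ∈ faceIco F G) : m K (p - z) = 1 :=
    (hm.apply_sub_eq_one_iff hK.1 hK.2.2 hpG).2 (hK.2.1 hp.1)
  have apply_w (K) (hK : K ∈ faceIco F G) : m K (v - μ • (p - z)) = m K v - μ := by
    rw [map_sub, map_smul, apply_p K hK, smul_eq_mul, mul_one]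
  have w_mem : v - μ • (p - z) ∈ vectorSpan ℝ G :=
    Submodule.sub_mem _ hv (Submodule.smul_mem _ μ (vsub_mem_vectorSpan ℝ hpG hz))
  have w_inward := hm.eventually_add_smul_mem hG hz hpG w_mem fun K hK hKG hpK => by
    have hKI : K ∈ faceIco F G := ⟨hK, hK.subset_of_mem_relint hF.subset hp hpK, hKG⟩
    rw [apply_w K hKI, sub_nonpos]
    exact hmax K hKI
  obtain ⟨ε, hε, H, hH, hpH, hxH⟩ := hG.exists_isFace_add_smul_mem_relint hpG w_inward
  set w := v - μ • (p - z)
  obtain ⟨hHI, hvH⟩ := hm.mem_cell_of_mem_relint hH (hH.subset_of_mem_relint hF.subset hp hpH) hxH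
    hε hv (fun K hK => by
      rw [add_sub_right_comm, map_add, map_smul, apply_p K hK, apply_w K hK, smul_eq_mul])
    hK₀ hμ.symm
  refine ⟨H, hHI, hvH, ?_⟩
  have hp_mem : p - z ∈ spanFrom z H := sub_mem_spanFrom hpH
  have hw_mem : ε • w ∈ spanFrom z H := by
    simpa using Submodule.sub_mem _ (sub_mem_spanFrom (z := z) hxH.1) hp_mem
  rw [Submodule.smul_mem_iff _ hε.ne'] at hw_mem
  rw [← sub_add_cancel v (μ • (p - z))]
  exact Submodule.add_mem _ hw_mem (Submodule.smul_mem _ μ hp_mem)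

theorem IsFaceFunctionals.exists_mem_cell (hm : IsFaceFunctionals G z m) (hG : IsPolytope G)
    (hz : z ∈ G) (hF : IsFace G F) (hFG : F ≠ G) (hv : v ∈ vectorSpan ℝ G) :
    ∃ H ∈ faceIco F G, v ∈ cell m F G H ∧ v ∈ spanFrom z H := by
  obtain rfl | hne := F.eq_empty_or_nonempty
  · exact hm.exists_mem_cell_of_empty hG hz hv
  · exact hm.exists_mem_cell_of_nonempty hG hz hF hne hFG hv

theorem IsFaceFunctionals.cell_subset_spanFrom (hm : IsFaceFunctionals G z m) (hG : IsPolytope G)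
    (hz : z ∈ G) (hF : IsFace G F) (hFG : F ≠ G) (hH : H ∈ faceIco F G) :
    cell m F G H ⊆ spanFrom z H := by
  intro v hv
  obtain ⟨H', hH', hvH', hspan⟩ := hm.exists_mem_cell hG hz hF hFG hv.1
  rwa [eq_of_mem_cell hH hH' hv hvH' fun _ _ _ _ => rfl]

theorem IsFaceFunctionals.smul_sub_mem_cell (hm : IsFaceFunctionals G z m) (hz : z ∈ G)
    (hH : H ∈ faceIco F G) (hy : y ∈ relint H) (ha : 0 < a) : a • (y - z) ∈ cell m F G H := by
  have hyG : y ∈ G := hH.1.subset hy.1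
  refine (hm.mem_cell_of_mem_relint hH.1 hH.2.1 hy (inv_pos.2 ha)
    (Submodule.smul_mem _ a (vsub_mem_vectorSpan ℝ hyG hz)) (fun K _ => ?_) hH (μ := a) ?_).2
  · rw [map_smul, smul_eq_mul, vsub_eq_sub]
    field_simp
    ring
  · rw [map_smul, vsub_eq_sub, (hm.apply_sub_eq_one_iff hH.1 hH.2.2 hyG).2 hy.1, smul_eq_mul,
      mul_one]

theorem IsFaceFunctionals.nonempty_cell (hm : IsFaceFunctionals G z m) (hG : IsPolytope G)
    (hz : z ∈ G) (hH : H ∈ faceIco F G) : (cell m F G H).Nonempty := by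
  obtain rfl | hne := H.eq_empty_or_nonempty
  · exact ⟨0, zero_mem_cell_empty⟩
  · obtain ⟨y, hy⟩ := (hG.of_isFace hH.1).nonempty_relint hne
    exact ⟨_, hm.smul_sub_mem_cell hz hH hy one_pos⟩

theorem IsFaceFunctionals.vectorSpan_cell (hm : IsFaceFunctionals G z m) (hG : IsPolytope G)
    (hz : z ∈ G) (hF : IsFace G F) (hFG : F ≠ G) (hH : H ∈ faceIco F G) :
    vectorSpan ℝ (cell m F G H) = spanFrom z H := by
  refine le_antisymm (Submodule.span_le.2 ?_) (Submodule.span_le.2 ?_)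
  · have hsub := hm.cell_subset_spanFrom hG hz hF hFG hH
    rintro _ ⟨v, hv, w, hw, rfl⟩
    exact Submodule.sub_mem _ (hsub hv) (hsub hw)
  · have hpoly := hG.of_isFace hH.1
    have relint_sub_mem (y) (hy : y ∈ relint H) : y - z ∈ vectorSpan ℝ (cell m F G H) := by
      have hmem := vsub_mem_vectorSpan ℝ (hm.smul_sub_mem_cell hz hH hy two_pos)
        (hm.smul_sub_mem_cell hz hH hy one_pos)
      rwa [vsub_eq_sub, one_smul, two_smul, add_sub_cancel_right] at hmem
    rintro _ ⟨x, hx, rfl⟩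
    obtain ⟨y, hy⟩ := hpoly.nonempty_relint ⟨x, hx⟩
    have midpoint_mem := relint_sub_mem _ <| smul_add_smul_mem_relint hpoly.convex hx hy
      (a := 1 / 2) (b := 1 / 2) (by norm_num) (by norm_num) (by norm_num)
    have hmem := Submodule.sub_mem _ (Submodule.smul_mem _ (2 : ℝ) midpoint_mem)
      (relint_sub_mem y hy)
    rw [SetLike.mem_coe]
    convert hmem using 1
    module

theorem span_inf_ker_eq_vectorSpan {A : Set V} {l : V →ₗ[ℝ] ℝ} (hl : ∀ x ∈ A, l x = 1) :
    Submodule.span ℝ A ⊓ LinearMap.ker l = vectorSpan ℝ A := by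
  obtain rfl | ⟨y, hy⟩ := A.eq_empty_or_nonempty
  · simp
  refine le_antisymm ?_ (Submodule.span_le.2 ?_)
  · have hle : Submodule.span ℝ A ≤
        (vectorSpan ℝ A).comap (LinearMap.id - l.smulRight y) := by
      refine Submodule.span_le.2 fun x hx => ?_
      simpa [hl x hx] using vsub_mem_vectorSpan ℝ hx hy
    rintro v ⟨hv, hlv⟩
    simpa [LinearMap.mem_ker.1 hlv] using hle hv
  · rintro _ ⟨x, hx, y, hy, rfl⟩
    refine ⟨Submodule.sub_mem _ (Submodule.subset_span hx) (Submodule.subset_span hy), ?_⟩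
    simp [hl x hx, hl y hy]

theorem vectorSpan_image_sub_const (H : Set V) (z : V) :
    vectorSpan ℝ ((· - z) '' H) = vectorSpan ℝ H := by
  rw [vectorSpan, vectorSpan]
  congr 1
  ext v
  simp [Set.mem_vsub]

theorem IsFaceFunctionals.finrank_spanFrom (hm : IsFaceFunctionals G z m) (hG : IsPolytope G)
    (hz : z ∈ G) (hH : IsFace G H) (hHG : H ≠ G) : (finrank ℝ (spanFrom z H) : ℤ) = pdim H + 1 := by
  obtain rfl | ⟨y, hy⟩ := H.eq_empty_or_nonempty
  · rw [spanFrom, Set.image_empty, Submodule.span_empty, finrank_bot, pdim, if_pos rfl]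
    rfl
  have := hG.finiteDimensional_vectorSpan
  have hle : spanFrom z H ≤ vectorSpan ℝ G := Submodule.span_le.2 <| by
    rintro _ ⟨x, hx, rfl⟩
    exact vsub_mem_vectorSpan ℝ (hH.subset hx) hz
  have : FiniteDimensional ℝ (spanFrom z H) := Submodule.finiteDimensional_of_le hle
  have apply_eq_one (x) (hx : x ∈ H) : m H (x - z) = 1 :=
    (hm.apply_sub_eq_one_iff hH hHG (hH.subset hx)).2 hx
  have inf_ker : spanFrom z H ⊓ LinearMap.ker (m H) = vectorSpan ℝ H := by
    rw [spanFrom, span_inf_ker_eq_vectorSpan (Set.forall_mem_image.2 apply_eq_one),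
      vectorSpan_image_sub_const]
  rw [← finrank_inf_ker_add_one (sub_mem_spanFrom hy)
    ((apply_eq_one y hy).trans_ne one_ne_zero), inf_ker, pdim,
    if_neg (Set.nonempty_of_mem hy).ne_empty, direction_affineSpan, Nat.cast_succ]

theorem IsFaceFunctionals.eulerSign_cell (hm : IsFaceFunctionals G z m) (hG : IsPolytope G)
    (hz : z ∈ G) (hF : IsFace G F) (hFG : F ≠ G) (hH : H ∈ faceIco F G) :
    eulerSign (cell m F G H) = (-1) ^ (pdim H + 1).toNat := by
  obtain ⟨v, hv⟩ := hm.nonempty_cell hG hz hH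
  rw [eulerSign_of_mem hv, hm.vectorSpan_cell hG hz hF hFG hH,
    ← hm.finrank_spanFrom hG hz hH.1 hH.2.2, Int.toNat_natCast]

theorem vectorSpan_submodule (W : Submodule ℝ V) : vectorSpan ℝ (W : Set V) = W := by
  rw [vectorSpan_eq_span_vsub_set_right ℝ W.zero_mem]
  simp

theorem eulerSign_vectorSpan (hne : G.Nonempty) :
    eulerSign (vectorSpan ℝ G : Set V) = (-1) ^ (pdim G).toNat := by
  rw [eulerSign_of_mem (Submodule.zero_mem _), vectorSpan_submodule, pdim, if_neg hne.ne_empty,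
    direction_affineSpan, Int.toNat_natCast]

/-- The cells of the faces `H` with `F ≤ H < G` partition the direction space of `G`, and the cell
of `H` has dimension `dim H + 1`. -/
theorem IsPolytope.finsum_neg_one_pow_pdim_add_one (hG : IsPolytope G) (hF : IsFace G F)
    (hFG : F ≠ G) :
    ∑ᶠ H ∈ faceIco F G, (-1 : ℤ) ^ (pdim H + 1).toNat = (-1) ^ (pdim G).toNat := by
  have hne : G.Nonempty := Set.nonempty_of_ssubset' (hF.subset.ssubset_of_ne hFG)
  obtain ⟨z, hz⟩ := hG.nonempty_relint hne
  obtain ⟨m, hm⟩ := exists_isFaceFunctionals hz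
  have hfin : (faceIco F G).Finite := finite_faceIco hG
  have := hG.finiteDimensional_vectorSpan
  have : FiniteDimensional ℝ (vectorSpan ℝ (vectorSpan ℝ G : Set V)) := by
    rwa [vectorSpan_submodule]
  let A : Finset (V →ₗ[ℝ] ℝ) := hfin.toFinset.image₂ (fun K K' => m K - m K') hfin.toFinset
  rw [finsum_mem_eq_finite_toFinset_sum _ hfin, ← eulerSign_vectorSpan hne,
    eulerSign_eq_sum_of_separated (I := hfin.toFinset) (D := cell m F G) A
      (isRelOpenConvex_submodule _) (fun _ _ => isRelOpenConvex_cell hG) (fun _ _ _ hv => hv.1)]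
  · refine Finset.sum_congr rfl fun H hH => ?_
    exact (hm.eulerSign_cell hG hz.1 hF hFG (hfin.mem_toFinset.1 hH)).symm
  · intro v hv
    obtain ⟨H, hH, hvH, -⟩ := hm.exists_mem_cell hG hz.1 hF hFG hv
    exact ⟨H, hfin.mem_toFinset.2 hH, hvH⟩
  · intro H hH H' hH' x hx y hy hsign
    refine eq_of_mem_cell (hfin.mem_toFinset.1 hH) (hfin.mem_toFinset.1 hH') hx hy ?_
    exact fun K hK K' hK' => hsign _ <| Finset.mem_image₂_of_mem (hfin.mem_toFinset.2 hK)
      (hfin.mem_toFinset.2 hK')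

end EulerRelation

section ToricRecursion

variable {V : Type*} [AddCommGroup V] [Module ℝ V] {F G : Set V}

theorem neg_one_le_pdim (F : Set V) : -1 ≤ pdim F := by
  unfold pdim
  split_ifs <;> omega

theorem pdim_nonneg (hF : F.Nonempty) : 0 ≤ pdim F := by
  rw [pdim, if_neg hF.ne_empty]
  positivity

theorem IsFace.pdim_lt (hF : IsFace G F) (hG : IsPolytope G) (hFG : F ≠ G) :
    pdim F < pdim G := by
  obtain rfl | hne := F.eq_empty_or_nonempty
  · have := pdim_nonneg (Set.nonempty_iff_ne_empty.2 hFG.symm)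
    rw [pdim, if_pos rfl]
    omega
  · have := hG.finiteDimensional_vectorSpan
    rw [pdim, pdim, if_neg hne.ne_empty, if_neg (hne.mono hF.subset).ne_empty,
      direction_affineSpan, direction_affineSpan]
    exact_mod_cast hF.finrank_vectorSpan_lt hne hFG

/-- The faces of `G` strictly above `F`; for a face `F` of `G`, the interval `(F, G]`. -/
def faceIoc (F G : Set V) : Set (Set V) := {K | IsFace G K ∧ F ⊆ K ∧ K ≠ F}

theorem relHAux_self (n : ℕ) (F : Set V) : relHAux n F F = 1 := by
  cases n <;> simp [relHAux]

theorem dualHAux_self (n : ℕ) (F : Set V) : dualHAux n F F = 1 := by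
  cases n <;> simp [dualHAux]

theorem relG_self (F : Set V) : relG F F = 1 := by
  rw [relG, relH, relHAux_self, truncG_one (by omega)]

theorem dualRelG_self (F : Set V) : dualRelG F F = 1 := by
  rw [dualRelG, dualHAux_self, truncG_one (by omega)]

theorem relHAux_succ_of_ne (n : ℕ) (hFG : F ≠ G) :
    relHAux (n + 1) F G = ∑ᶠ K ∈ faceIco F G,
      truncG (pdim K - pdim F - 1) (relHAux n F K) * (X - 1) ^ (pdim G - pdim K - 1).toNat := by
  rw [relHAux, if_neg hFG.symm]
  rfl

theorem dualHAux_succ_of_ne (n : ℕ) (hFG : F ≠ G) :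
    dualHAux (n + 1) F G = ∑ᶠ K ∈ faceIoc F G,
      truncG (pdim G - pdim K - 1) (dualHAux n K G) * (X - 1) ^ (pdim K - pdim F - 1).toNat := by
  rw [dualHAux, if_neg hFG.symm]
  rfl

theorem relHAux_eq_relHAux {n N : ℕ} (hG : IsPolytope G) (hF : IsFace G F)
    (hn : (pdim G + 1).toNat ≤ n) (hN : (pdim G + 1).toNat ≤ N) :
    relHAux n F G = relHAux N F G := by
  induction n generalizing N G with
  | zero =>
    obtain rfl : F = G := by
      by_contra hFG
      have := hF.pdim_lt hG hFG
      have := neg_one_le_pdim F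
      omega
    rw [relHAux_self, relHAux_self]
  | succ n ih =>
    obtain rfl | hFG := eq_or_ne F G
    · rw [relHAux_self, relHAux_self]
    have hlt := hF.pdim_lt hG hFG
    have hge := neg_one_le_pdim F
    obtain ⟨N, rfl⟩ : ∃ M, N = M + 1 := ⟨N - 1, by omega⟩
    rw [relHAux_succ_of_ne n hFG, relHAux_succ_of_ne N hFG]
    refine finsum_mem_congr rfl fun K ⟨hK, hFK, hKG⟩ => ?_
    have := hK.pdim_lt hG hKG
    rw [ih (hG.of_isFace hK) (hF.of_subset hK.subset hFK) (N := N) (by omega) (by omega)]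

theorem dualHAux_eq_dualHAux {n N : ℕ} (hG : IsPolytope G) (hF : IsFace G F)
    (hn : (pdim G - pdim F).toNat ≤ n) (hN : (pdim G - pdim F).toNat ≤ N) :
    dualHAux n F G = dualHAux N F G := by
  induction n generalizing N F with
  | zero =>
    obtain rfl : F = G := by
      by_contra hFG
      have := hF.pdim_lt hG hFG
      omega
    rw [dualHAux_self, dualHAux_self]
  | succ n ih =>
    obtain rfl | hFG := eq_or_ne F G
    · rw [dualHAux_self, dualHAux_self]
    have hlt := hF.pdim_lt hG hFG
    obtain ⟨N, rfl⟩ : ∃ M, N = M + 1 := ⟨N - 1, by omega⟩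
    rw [dualHAux_succ_of_ne n hFG, dualHAux_succ_of_ne N hFG]
    refine finsum_mem_congr rfl fun K ⟨hK, hFK, hKF⟩ => ?_
    have := (hF.of_subset hK.subset hFK).pdim_lt (hG.of_isFace hK) hKF.symm
    rw [ih hK (N := N) (by omega) (by omega)]

theorem relG_eq_truncG (hG : IsPolytope G) (hF : IsFace G F) (hFG : F ≠ G) :
    relG F G = truncG (pdim G - pdim F - 1)
      (∑ᶠ K ∈ faceIco F G, relG F K * (X - 1) ^ (pdim G - pdim K - 1).toNat) := by
  have hlt := hF.pdim_lt hG hFG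
  have hge := neg_one_le_pdim F
  obtain ⟨n, hn⟩ : ∃ n, (pdim G + 1).toNat = n + 1 := ⟨(pdim G).toNat, by omega⟩
  rw [relG, relH, hn, relHAux_succ_of_ne n hFG]
  congr 1
  refine finsum_mem_congr rfl fun K ⟨hK, hFK, hKG⟩ => ?_
  have := hK.pdim_lt hG hKG
  rw [relG, relH, relHAux_eq_relHAux (hG.of_isFace hK) (hF.of_subset hK.subset hFK) _ le_rfl]
  omega

theorem dualRelG_eq_truncG (hG : IsPolytope G) (hF : IsFace G F) (hFG : F ≠ G) :
    dualRelG F G = truncG (pdim G - pdim F - 1)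
      (∑ᶠ K ∈ faceIoc F G, dualRelG K G * (X - 1) ^ (pdim K - pdim F - 1).toNat) := by
  have hlt := hF.pdim_lt hG hFG
  obtain ⟨n, hn⟩ : ∃ n, (pdim G - pdim F + 1).toNat = n + 1 :=
    ⟨(pdim G - pdim F).toNat, by omega⟩
  rw [dualRelG, hn, dualHAux_succ_of_ne n hFG]
  congr 1
  refine finsum_mem_congr rfl fun K ⟨hK, hFK, hKF⟩ => ?_
  have := (hF.of_subset hK.subset hFK).pdim_lt (hG.of_isFace hK) hKF.symm
  rw [dualRelG, dualHAux_eq_dualHAux hG hK] <;> omega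

end ToricRecursion

section FaceLattice

variable {V : Type*} [AddCommGroup V] [Module ℝ V] {P : Set V}

/-- The faces of `P`, ordered by inclusion. -/
abbrev FaceLattice (P : Set V) : Type _ := {F : Set V // IsFace P F}

/-- The dimension of a face, as a rank function on the face lattice. -/
noncomputable def faceRank (F : FaceLattice P) : ℤ := pdim F.1

/-- The incidence function on the face lattice given by a function of pairs of faces. -/
noncomputable def faceIncidence (P : Set V) (φ : Set V → Set V → ℚ[X]) :
    IncidenceAlgebra ℚ[X] (FaceLattice P) where
  toFun F G := if F ≤ G then φ F G else 0
  eq_zero_of_not_le' _ _ h := if_neg h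

variable {s t : FaceLattice P}

theorem faceIncidence_apply {φ : Set V → Set V → ℚ[X]} (hst : s ≤ t) :
    faceIncidence P φ s t = φ s t :=
  if_pos hst

theorem isFace_of_le (hst : s ≤ t) : IsFace t.1 s.1 :=
  s.2.of_subset t.2.subset hst

theorem strictMono_faceRank (hP : IsPolytope P) : StrictMono (faceRank : FaceLattice P → ℤ) :=
  fun _ t hst =>
    (isFace_of_le hst.le).pdim_lt (hP.of_isFace t.2) (Subtype.coe_injective.ne hst.ne)

theorem image_coe_Ico (hP : IsPolytope P) (s t : FaceLattice P) :
    Subtype.val '' Set.Ico s t = faceIco s.1 t.1 := by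
  ext K
  constructor
  · rintro ⟨x, ⟨hsx, hxt⟩, rfl⟩
    exact ⟨isFace_of_le hxt.le, hsx, Subtype.coe_injective.ne hxt.ne⟩
  · rintro ⟨hK, hsK, hKt⟩
    exact ⟨⟨K, t.2.trans hP hK⟩,
      ⟨hsK, lt_of_le_of_ne hK.subset fun h => hKt (congrArg Subtype.val h)⟩, rfl⟩

theorem image_coe_Ioc (hP : IsPolytope P) (s t : FaceLattice P) :
    Subtype.val '' Set.Ioc s t = faceIoc s.1 t.1 := by
  ext K
  constructor
  · rintro ⟨x, ⟨hsx, hxt⟩, rfl⟩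
    exact ⟨isFace_of_le hxt, hsx.le, Subtype.coe_injective.ne hsx.ne'⟩
  · rintro ⟨hK, hsK, hKs⟩
    exact ⟨⟨K, t.2.trans hP hK⟩,
      ⟨lt_of_le_of_ne hsK fun h => hKs (congrArg Subtype.val h.symm), hK.subset⟩, rfl⟩

theorem image_coe_Icc_empty_self (P : Set V) :
    Subtype.val '' Set.Icc (⟨∅, isFace_empty P⟩ : FaceLattice P) ⟨P, isFace_self P⟩ =
      {F | IsFace P F} := by
  ext K
  constructor
  · rintro ⟨x, -, rfl⟩
    exact x.2
  · exact fun hK => ⟨⟨K, hK⟩, ⟨K.empty_subset, hK.subset⟩, rfl⟩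

theorem finsum_mem_image_coe {M : Type*} [AddCommMonoid M] (A : Finset (FaceLattice P))
    (φ : Set V → M) : ∑ᶠ K ∈ Subtype.val '' (A : Set (FaceLattice P)), φ K = ∑ x ∈ A, φ x := by
  rw [finsum_mem_image Subtype.val_injective.injOn, finsum_mem_coe_finset]

theorem neg_one_pow_pdim_eq_mul_neg_one_pow_rankDiff {R : Type*} [Ring R] (hP : IsPolytope P)
    (ht : t.1.Nonempty) (hst : s ≤ t) :
    (-1 : R) ^ ((pdim s.1 + 1).toNat + 1) =
      (-1) ^ (pdim t.1).toNat * (-1) ^ rankDiff faceRank s t := by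
  have hle := (strictMono_faceRank hP).monotone hst
  have hge := neg_one_le_pdim s.1
  have hnonneg := pdim_nonneg ht
  rw [← pow_add]
  apply neg_one_pow_congr
  simp only [faceRank, rankDiff, Nat.even_iff] at *
  omega

variable [LocallyFiniteOrder (FaceLattice P)]

theorem isEulerian_faceRank (hP : IsPolytope P) : IsEulerian (faceRank : FaceLattice P → ℤ) := by
  intro s t hst
  have euler : ∑ x ∈ Finset.Ico s t, (-1 : ℤ) ^ (pdim x.1 + 1).toNat = (-1) ^ (pdim t.1).toNat := by
    rw [← (hP.of_isFace t.2).finsum_neg_one_pow_pdim_add_one (isFace_of_le hst.le)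
      (Subtype.coe_injective.ne hst.ne), ← image_coe_Ico hP, ← Finset.coe_Ico, finsum_mem_image_coe]
  have ht : t.1.Nonempty := Set.nonempty_of_ssubset' hst
  have sum_eq_zero : ∑ x ∈ Finset.Icc s t,
      (-1 : ℤ) ^ (pdim t.1).toNat * (-1) ^ rankDiff faceRank x t = 0 := by
    rw [Finset.sum_congr rfl fun x hx => (neg_one_pow_pdim_eq_mul_neg_one_pow_rankDiff hP ht
        (Finset.mem_Icc.1 hx).2).symm, ← Finset.sum_Ico_add_eq_sum_Icc hst.le]
    simp only [pow_succ _ (Int.toNat _), ← Finset.sum_mul, euler]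
    rw [Int.toNat_add (pdim_nonneg ht) zero_le_one, pow_add]
    simp
  rw [← Finset.mul_sum] at sum_eq_zero
  exact (mul_eq_zero.1 sum_eq_zero).resolve_left (pow_ne_zero _ (by decide))

theorem isToricG_relG (hP : IsPolytope P) : IsToricG faceRank (faceIncidence P relG) where
  apply_self s := by rw [faceIncidence_apply le_rfl, relG_self]
  apply_of_lt s t hst := by
    rw [faceIncidence_apply hst.le, relG_eq_truncG (hP.of_isFace t.2) (isFace_of_le hst.le)
      (Subtype.coe_injective.ne hst.ne), ← image_coe_Ico hP, ← Finset.coe_Ico, finsum_mem_image_coe]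
    congr 1
    refine Finset.sum_congr rfl fun x hx => ?_
    rw [faceIncidence_apply (Finset.mem_Ico.1 hx).1]
    rfl

theorem isToricG_dualRelG (hP : IsPolytope P) :
    IsToricG (dualRank faceRank) (dualIncidence (faceIncidence P dualRelG)) := by
  refine isToricG_dualIncidence (fun s => ?_) fun s t hst => ?_
  · rw [faceIncidence_apply le_rfl, dualRelG_self]
  · rw [faceIncidence_apply hst.le, dualRelG_eq_truncG (hP.of_isFace t.2) (isFace_of_le hst.le)
      (Subtype.coe_injective.ne hst.ne), ← image_coe_Ioc hP, ← Finset.coe_Ioc, finsum_mem_image_coe]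
    congr 1
    refine Finset.sum_congr rfl fun x hx => ?_
    rw [faceIncidence_apply (Finset.mem_Ioc.1 hx).2]
    rfl

end FaceLattice

/-- Stanley's reciprocity identity: for every nonempty polytope `P`,
`∑_{∅ ≤ F ≤ P} (-1)^{dim F} g(F*,t) g(P/F,t) = 0`.  The sign `(-1)^{dim F}` is
written as `(-1)^{(dim F + 1).toNat + 1}`, which has the correct parity for all
faces (including `∅`, of dimension `-1`). -/
theorem stanley_reciprocity {V : Type*} [AddCommGroup V] [Module ℝ V]
    (P : Set V) (hP : IsPolytope P) (hne : P ≠ ∅) :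
    ∑ᶠ F ∈ {F : Set V | IsFace P F},
      (-1 : Polynomial ℚ) ^ ((pdim F + 1).toNat + 1) * (toricGDual F * relG F P) = 0 := by
  have : Fintype (FaceLattice P) := hP.finite_faces.fintype
  let : LocallyFiniteOrder (FaceLattice P) := Fintype.toLocallyFiniteOrder
  let bot : FaceLattice P := ⟨∅, isFace_empty P⟩
  let top : FaceLattice P := ⟨P, isFace_self P⟩
  have bot_ne_top : bot ≠ top := fun h => hne (congrArg Subtype.val h.symm)
  have reciprocity := (isToricG_dualRelG hP).sum_mul_signTwist_eq_zero (isToricG_relG hP)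
    (isEulerian_faceRank hP) (strictMono_faceRank hP) bot_ne_top
  rw [← image_coe_Icc_empty_self, ← Finset.coe_Icc, finsum_mem_image_coe,
    ← mul_zero ((-1) ^ (pdim P).toNat), ← reciprocity, Finset.mul_sum]
  refine Finset.sum_congr rfl fun x hx => ?_
  rw [neg_one_pow_pdim_eq_mul_neg_one_pow_rankDiff hP (t := top) (Set.nonempty_iff_ne_empty.2 hne)
      (Finset.mem_Icc.1 hx).2, signTwist_apply, faceIncidence_apply (Finset.mem_Icc.1 hx).1,
    faceIncidence_apply (Finset.mem_Icc.1 hx).2, toricGDual]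
  ring
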